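/- Let 𝛑 be a policy ensemble, Lipschitz continuous in α up to finitely many discontinuities, with 𝛍 = Ψ(𝛑). Under Assumptions (W) and (Lip), consider the N-agent policy (π¹,…,π^{i−1},π̂,π^{i+1},…,π^N) where (π¹,…,π^N) = Γ_N(𝛑) and π̂ ∈ Π is arbitrary. Then for any family 𝒢 of functions g : 𝒳 → ℝ uniformly bounded by some M_g > 0, and any ε, p > 0 and t ∈ 𝒯, there exists N' such that for all N > N': sup_{g∈𝒢} |E[g(X^i_t)] − E[g(X̂^{i/N}_t)]| < ε, uniformly over all deviations π̂ ∈ Π and all i in some set 𝒲_N ⊆ 𝒱_N with |𝒲_N| ≥ ⌊(1−p)N⌋. -/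

import Mathlib

open MeasureTheory Filter
open scoped BigOperators

namespace GMFG

variable {𝒳 𝒰 : Type*}

/-- The probability simplex 𝒫(𝒳) on a finite set, as probability mass functions. -/
def simplex (𝒳 : Type*) [Fintype 𝒳] : Set (𝒳 → ℝ) :=
  {p | (∀ x, 0 ≤ p x) ∧ ∑ x, p x = 1}

/-- The set ℬ₁(𝒳) of (sub-probability) measures with total mass at most 1,
as mass functions. -/
def subProb (𝒳 : Type*) [Fintype 𝒳] : Set (𝒳 → ℝ) :=
  {p | (∀ x, 0 ≤ p x) ∧ ∑ x, p x ≤ 1}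

/-- L¹ distance between measures on a finite set. -/
noncomputable def l1dist [Fintype 𝒳] (ν ν' : 𝒳 → ℝ) : ℝ := ∑ x, |ν x - ν' x|

/-- Markovian feedback policies π ∈ Π = 𝒫(𝒰)^{𝒯×𝒳}. -/
def IsPolicy [Fintype 𝒰] (π : ℕ → 𝒳 → 𝒰 → ℝ) : Prop :=
  ∀ t x, (∀ u, 0 ≤ π t x u) ∧ ∑ u, π t x u = 1

/-- P : 𝒳×𝒰×ℬ₁(𝒳) → 𝒫(𝒳) is a transition kernel. -/
def IsKernel [Fintype 𝒳] [Fintype 𝒰] (P : 𝒳 → 𝒰 → (𝒳 → ℝ) → 𝒳 → ℝ) : Prop :=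
  ∀ x u ν, ν ∈ subProb 𝒳 → P x u ν ∈ simplex 𝒳

/-- Lipschitz continuity of the transition kernel w.r.t. the L¹ norm. -/
def KernelLipschitz [Fintype 𝒳] [Fintype 𝒰] (P : 𝒳 → 𝒰 → (𝒳 → ℝ) → 𝒳 → ℝ) (L : ℝ) : Prop :=
  ∀ x u ν ν', ν ∈ subProb 𝒳 → ν' ∈ subProb 𝒳 → l1dist (P x u ν) (P x u ν') ≤ L * l1dist ν ν'

/-- Lipschitz continuity of the reward w.r.t. the L¹ norm. -/
def RewardLipschitz [Fintype 𝒳] [Fintype 𝒰] (r : 𝒳 → 𝒰 → (𝒳 → ℝ) → ℝ) (L : ℝ) : Prop :=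
  ∀ x u ν ν', ν ∈ subProb 𝒳 → ν' ∈ subProb 𝒳 → |r x u ν - r x u ν'| ≤ L * l1dist ν ν'

/-- A graphon: symmetric, measurable, [0,1]-valued. -/
def IsGraphon (W : ℝ → ℝ → ℝ) : Prop :=
  Measurable (Function.uncurry W) ∧ (∀ a b, W a b = W b a) ∧ ∀ a b, W a b ∈ Set.Icc (0:ℝ) 1

/-- Lipschitz continuity of a graphon on [0,1]². -/
def GraphonLipschitz (W : ℝ → ℝ → ℝ) (L : ℝ) : Prop :=
  ∀ a b a' b' : ℝ, a ∈ Set.Icc (0:ℝ) 1 → b ∈ Set.Icc (0:ℝ) 1 → a' ∈ Set.Icc (0:ℝ) 1 →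
    b' ∈ Set.Icc (0:ℝ) 1 → |W a b - W a' b'| ≤ L * (|a - a'| + |b - b'|)

/-- The neighborhood mean field 𝔾^α = ∫₀¹ W(α,β) ν^β dβ of a state marginal ensemble ν. -/
noncomputable def nbhd [Fintype 𝒳] (W : ℝ → ℝ → ℝ) (ν : ℝ → 𝒳 → ℝ) (α : ℝ) : 𝒳 → ℝ :=
  fun x => ∫ β in Set.Ioc (0:ℝ) 1, W α β * ν β x

/-- 𝛍 = Ψ(𝛑): the (measurable) mean field ensemble generated by the policy ensemble 𝛑,
via μ^α_0 = μ₀ and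
μ^α_{t+1}(x') = Σ_{x,u} μ^α_t(x) π^α_t(u|x) P(x'|x,u,𝔾^α_t). -/
def IsMeanFieldOf [Fintype 𝒳] [Fintype 𝒰] (W : ℝ → ℝ → ℝ) (P : 𝒳 → 𝒰 → (𝒳 → ℝ) → 𝒳 → ℝ)
    (μ0 : 𝒳 → ℝ) (πe : ℝ → ℕ → 𝒳 → 𝒰 → ℝ) (μ : ℕ → ℝ → 𝒳 → ℝ) : Prop :=
  (∀ t x, Measurable fun α => μ t α x) ∧
  (∀ α ∈ Set.Icc (0:ℝ) 1, μ 0 α = μ0) ∧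
  ∀ t : ℕ, ∀ α ∈ Set.Icc (0:ℝ) 1, ∀ x' : 𝒳,
    μ (t+1) α x' = ∑ x, μ t α x * ∑ u, πe α t x u * P x u (nbhd W (μ t) α) x'

/-- The law of the state of a single mean field agent with neighborhood mean field
G and policy π: X_0 ∼ μ₀, U_t ∼ π_t(·|X_t), X_{t+1} ∼ P(·|X_t,U_t,G_t). -/
noncomputable def stateLaw [Fintype 𝒳] [Fintype 𝒰] (P : 𝒳 → 𝒰 → (𝒳 → ℝ) → 𝒳 → ℝ)
    (μ0 : 𝒳 → ℝ) (G : ℕ → 𝒳 → ℝ) (π : ℕ → 𝒳 → 𝒰 → ℝ) : ℕ → 𝒳 → ℝ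
  | 0 => μ0
  | (t+1) => fun x' => ∑ x, stateLaw P μ0 G π t x * ∑ u, π t x u * P x u (G t) x'

/-- Mean field objective J(π) = E[Σ_{t<T} r(X_t,U_t,G_t)] of a single agent whose
neighborhood mean field is G. -/
noncomputable def Jmf [Fintype 𝒳] [Fintype 𝒰] (T : ℕ) (r : 𝒳 → 𝒰 → (𝒳 → ℝ) → ℝ)
    (P : 𝒳 → 𝒰 → (𝒳 → ℝ) → 𝒳 → ℝ) (μ0 : 𝒳 → ℝ) (G : ℕ → 𝒳 → ℝ) (π : ℕ → 𝒳 → 𝒰 → ℝ) : ℝ :=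
  ∑ t ∈ Finset.range T, ∑ x, stateLaw P μ0 G π t x * ∑ u, π t x u * r x u (G t)

/-- A Graphon Mean Field Equilibrium: a measurable policy ensemble 𝛑 and mean field
ensemble 𝛍 with 𝛍 = Ψ(𝛑) and π^α optimal for J^𝛍_α for every α ∈ [0,1]. -/
def IsGMFE [Fintype 𝒳] [Fintype 𝒰] (T : ℕ) (W : ℝ → ℝ → ℝ) (P : 𝒳 → 𝒰 → (𝒳 → ℝ) → 𝒳 → ℝ)
    (r : 𝒳 → 𝒰 → (𝒳 → ℝ) → ℝ) (μ0 : 𝒳 → ℝ)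
    (πe : ℝ → ℕ → 𝒳 → 𝒰 → ℝ) (μ : ℕ → ℝ → 𝒳 → ℝ) : Prop :=
  (∀ t x u, Measurable fun α => πe α t x u) ∧
  (∀ α ∈ Set.Icc (0:ℝ) 1, IsPolicy (πe α)) ∧
  IsMeanFieldOf W P μ0 πe μ ∧
  ∀ α ∈ Set.Icc (0:ℝ) 1, ∀ π' : ℕ → 𝒳 → 𝒰 → ℝ, IsPolicy π' →
    Jmf T r P μ0 (fun t => nbhd W (μ t) α) π' ≤ Jmf T r P μ0 (fun t => nbhd W (μ t) α) (πe α)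

/-- α ↦ π^α is Lipschitz continuous up to a finite set D of discontinuities. -/
def EnsembleLipschitzUpTo [Fintype 𝒳] [Fintype 𝒰] (πe : ℝ → ℕ → 𝒳 → 𝒰 → ℝ) : Prop :=
  ∃ (L : ℝ) (D : Finset ℝ), ∀ (t : ℕ) (x : 𝒳) (u : 𝒰),
    ∀ α ∈ Set.Icc (0:ℝ) 1, ∀ β ∈ Set.Icc (0:ℝ) 1,
      (∀ d ∈ D, d ∉ Set.uIcc α β) → |πe α t x u - πe β t x u| ≤ L * |α - β|

/-- Edge indicators of a simple (undirected) graph. -/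
def IsEdgeWeights {N : ℕ} (ξ : Fin N → Fin N → ℝ) : Prop :=
  (∀ i j, ξ i j = 0 ∨ ξ i j = 1) ∧ ∀ i j, ξ i j = ξ j i

/-- Empirical neighborhood mean field 𝔾ⁱ = (1/N) Σ_j ξ_{ij} δ_{X^j}. -/
noncomputable def empNbhd [Fintype 𝒳] [DecidableEq 𝒳] {N : ℕ} (ξ : Fin N → Fin N → ℝ)
    (X : Fin N → 𝒳) (i : Fin N) : 𝒳 → ℝ :=
  fun x => (N : ℝ)⁻¹ * ∑ j, ξ i j * (if X j = x then 1 else 0)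

/-- The joint law of the N agents' states at time t: X^i_0 ∼ μ₀ i.i.d.,
U^i_t ∼ π^i_t(·|X^i_t), X^i_{t+1} ∼ P(·|X^i_t,U^i_t,𝔾^i_t) conditionally independently. -/
noncomputable def jointLaw [Fintype 𝒳] [DecidableEq 𝒳] [Fintype 𝒰] {N : ℕ}
    (P : 𝒳 → 𝒰 → (𝒳 → ℝ) → 𝒳 → ℝ) (μ0 : 𝒳 → ℝ) (ξ : Fin N → Fin N → ℝ)
    (πs : Fin N → ℕ → 𝒳 → 𝒰 → ℝ) : ℕ → (Fin N → 𝒳) → ℝ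
  | 0 => fun X => ∏ i, μ0 (X i)
  | (t+1) => fun Y => ∑ X : Fin N → 𝒳, jointLaw P μ0 ξ πs t X *
      ∏ i, ∑ u, πs i t (X i) u * P (X i) u (empNbhd ξ X i) (Y i)

/-- The objective J^N_i = E[Σ_{t<T} r(X^i_t,U^i_t,𝔾^i_t)] of agent i in the N-agent game. -/
noncomputable def JN [Fintype 𝒳] [DecidableEq 𝒳] [Fintype 𝒰] {N : ℕ} (T : ℕ)
    (r : 𝒳 → 𝒰 → (𝒳 → ℝ) → ℝ) (P : 𝒳 → 𝒰 → (𝒳 → ℝ) → 𝒳 → ℝ) (μ0 : 𝒳 → ℝ)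
    (ξ : Fin N → Fin N → ℝ) (πs : Fin N → ℕ → 𝒳 → 𝒰 → ℝ) (i : Fin N) : ℝ :=
  ∑ t ∈ Finset.range T, ∑ X : Fin N → 𝒳, jointLaw P μ0 ξ πs t X *
    ∑ u, πs i t (X i) u * r (X i) u (empNbhd ξ X i)

/-- Γ_N(𝛑) = (π^{1/N},…,π^{N/N}) (agent i : Fin N has graphon index (i+1)/N). -/
noncomputable def gammaN (πe : ℝ → ℕ → 𝒳 → 𝒰 → ℝ) (N : ℕ) : Fin N → ℕ → 𝒳 → 𝒰 → ℝ :=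
  fun i => πe ((((i : ℕ) : ℝ) + 1) / N)

/-- The step graphon W_N of a finite graph: W_N(x,y) = ξ_{⌈Nx⌉,⌈Ny⌉}. -/
noncomputable def stepGraphon {N : ℕ} (ξ : Fin N → Fin N → ℝ) : ℝ → ℝ → ℝ := fun a b =>
  ∑ i : Fin N, ∑ j : Fin N,
    (if ((i : ℕ) : ℝ) / N < a ∧ a ≤ (((i : ℕ) : ℝ) + 1) / N then 1 else 0) *
    (if ((j : ℕ) : ℝ) / N < b ∧ b ≤ (((j : ℕ) : ℝ) + 1) / N then 1 else 0) * ξ i j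

/-- Assumption (W): ‖W_N − W‖_{L∞→L1} → 0, i.e.
sup_{‖g‖∞ ≤ 1} ∫₀¹ |∫₀¹ (W_N(α,β) − W(α,β)) g(β) dβ| dα → 0. -/
def OpConvergesTo (WN : (N : ℕ) → ℝ → ℝ → ℝ) (W : ℝ → ℝ → ℝ) : Prop :=
  ∀ ε > (0:ℝ), ∃ N₀ : ℕ, ∀ N ≥ N₀, ∀ g : ℝ → ℝ, Measurable g → (∀ β, |g β| ≤ 1) →
    (∫ α in Set.Ioc (0:ℝ) 1, |∫ β in Set.Ioc (0:ℝ) 1, (WN N α β - W α β) * g β|) ≤ ε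

/-- ‖W_N − W‖_{L∞→L1} = O(1/√N). -/
def OpRateSqrt (WN : (N : ℕ) → ℝ → ℝ → ℝ) (W : ℝ → ℝ → ℝ) : Prop :=
  ∃ C : ℝ, ∀ N : ℕ, 1 ≤ N → ∀ g : ℝ → ℝ, Measurable g → (∀ β, |g β| ≤ 1) →
    (∫ α in Set.Ioc (0:ℝ) 1, |∫ β in Set.Ioc (0:ℝ) 1, (WN N α β - W α β) * g β|) ≤ C / Real.sqrt N

/-- 𝛍^N_t(f) = ∫₀¹ f(X^{⌈Nα⌉}, α) dα, the integral of f against the random empirical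
step measure ensemble. -/
noncomputable def empInt [Fintype 𝒳] {N : ℕ} (f : 𝒳 → ℝ → ℝ) (X : Fin N → 𝒳) : ℝ :=
  ∑ i : Fin N, ∫ α in Set.Ioc (((i : ℕ) : ℝ) / N) ((((i : ℕ) : ℝ) + 1) / N), f (X i) α

/-- 𝛍_t(f) = ∫₀¹ Σ_x f(x,α) μ^α_t(x) dα. -/
noncomputable def mfInt [Fintype 𝒳] (f : 𝒳 → ℝ → ℝ) (ν : ℝ → 𝒳 → ℝ) : ℝ :=
  ∫ α in Set.Ioc (0:ℝ) 1, ∑ x, f x α * ν α x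

/-- The representative α_m = (m+1)/M of the m-th equivalence class Ĩ_m = (m/M,(m+1)/M]. -/
noncomputable def rep (M : ℕ) (m : Fin M) : ℝ := (((m : ℕ) : ℝ) + 1) / M

/-- Discretized neighborhood mean field 𝔾̂^{α_m} = (1/M) Σ_n W(α_m,α_n) ν^{α_n}. -/
noncomputable def approxNbhd [Fintype 𝒳] {M : ℕ} (W : ℝ → ℝ → ℝ) (ν : Fin M → 𝒳 → ℝ)
    (m : Fin M) : 𝒳 → ℝ :=
  fun x => (M : ℝ)⁻¹ * ∑ n, W (rep M m) (rep M n) * ν n x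

/-- The approximate mean field μ̂ = Ψ̂(𝛑) of the M equivalence classes method. -/
noncomputable def approxMF [Fintype 𝒳] [Fintype 𝒰] {M : ℕ} (W : ℝ → ℝ → ℝ)
    (P : 𝒳 → 𝒰 → (𝒳 → ℝ) → 𝒳 → ℝ) (μ0 : 𝒳 → ℝ) (πm : Fin M → ℕ → 𝒳 → 𝒰 → ℝ) :
    ℕ → Fin M → 𝒳 → ℝ
  | 0 => fun _ => μ0
  | (t+1) => fun m x' => ∑ x, approxMF W P μ0 πm t m x *
      ∑ u, πm m t x u * P x u (approxNbhd W (approxMF W P μ0 πm t) m) x'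

/-- A solution (𝛑, 𝛍) of the M equivalence classes method: 𝛑 is determined by policies
π^{α_m} (one per class), each optimal for the generated approximate mean field 𝛍 = Ψ̂(𝛑). -/
def IsEqClassSolution [Fintype 𝒳] [Fintype 𝒰] (T : ℕ) {M : ℕ} (W : ℝ → ℝ → ℝ)
    (P : 𝒳 → 𝒰 → (𝒳 → ℝ) → 𝒳 → ℝ) (r : 𝒳 → 𝒰 → (𝒳 → ℝ) → ℝ) (μ0 : 𝒳 → ℝ)
    (πm : Fin M → ℕ → 𝒳 → 𝒰 → ℝ) : Prop :=
  (∀ m, IsPolicy (πm m)) ∧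
  ∀ m, ∀ π' : ℕ → 𝒳 → 𝒰 → ℝ, IsPolicy π' →
    Jmf T r P μ0 (fun t => approxNbhd W (approxMF W P μ0 πm t) m) π'
      ≤ Jmf T r P μ0 (fun t => approxNbhd W (approxMF W P μ0 πm t) m) (πm m)

/-- The optimal action value function Q with k steps to go from time t,
Q(t,x,u) = r(x,u,G_t) + Σ_{x'} P(x'|x,u,G_t) max_{u'} Q(t+1,x',u'). -/
noncomputable def Qfun [Fintype 𝒳] [Fintype 𝒰] [Nonempty 𝒰] (r : 𝒳 → 𝒰 → (𝒳 → ℝ) → ℝ)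
    (P : 𝒳 → 𝒰 → (𝒳 → ℝ) → 𝒳 → ℝ) (G : ℕ → 𝒳 → ℝ) : ℕ → ℕ → 𝒳 → 𝒰 → ℝ
  | 0 => fun _ _ _ => 0
  | (k+1) => fun t x u => r x u (G t) + ∑ x', P x u (G t) x' *
      Finset.univ.sup' Finset.univ_nonempty (fun u' => Qfun r P G k (t+1) x' u')

/-- The Boltzmann (softmax) policy Φ̂_η(𝛍) of the M equivalence classes method with
horizon T, temperature η and block mean field ν. -/
noncomputable def boltzmann [Fintype 𝒳] [Fintype 𝒰] [Nonempty 𝒰] (T : ℕ) (η : ℝ)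
    (r : 𝒳 → 𝒰 → (𝒳 → ℝ) → ℝ) (P : 𝒳 → 𝒰 → (𝒳 → ℝ) → 𝒳 → ℝ) (W : ℝ → ℝ → ℝ) {M : ℕ}
    (ν : ℕ → Fin M → 𝒳 → ℝ) : Fin M → ℕ → 𝒳 → 𝒰 → ℝ :=
  fun m t x u =>
    Real.exp (Qfun r P (fun s => approxNbhd W (ν s) m) (T - t) t x u / η) /
      ∑ u' : 𝒰, Real.exp (Qfun r P (fun s => approxNbhd W (ν s) m) (T - t) t x u' / η)

/-- One step 𝛍 ↦ Ψ̂(Φ̂_η(𝛍)) of the Boltzmann fixed point iteration. -/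
noncomputable def boltzIter [Fintype 𝒳] [Fintype 𝒰] [Nonempty 𝒰] (T : ℕ) (η : ℝ)
    (r : 𝒳 → 𝒰 → (𝒳 → ℝ) → ℝ) (P : 𝒳 → 𝒰 → (𝒳 → ℝ) → 𝒳 → ℝ) (W : ℝ → ℝ → ℝ) (μ0 : 𝒳 → ℝ)
    {M : ℕ} (ν : ℕ → Fin M → 𝒳 → ℝ) : ℕ → Fin M → 𝒳 → ℝ :=
  fun t => approxMF W P μ0 (boltzmann T η r P W ν) t




section partA

variable {𝒳 𝒰 : Type*} [Fintype 𝒳] [Fintype 𝒰]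

/-- One-step state transition probabilities under a policy. -/
noncomputable def stepQ (P : 𝒳 → 𝒰 → (𝒳 → ℝ) → 𝒳 → ℝ) (π : ℕ → 𝒳 → 𝒰 → ℝ) (t : ℕ)
    (x : 𝒳) (ν : 𝒳 → ℝ) (x' : 𝒳) : ℝ := ∑ u, π t x u * P x u ν x'

lemma stepQ_simplex {P : 𝒳 → 𝒰 → (𝒳 → ℝ) → 𝒳 → ℝ} (hP : IsKernel P) {π : ℕ → 𝒳 → 𝒰 → ℝ}
    (hπ : IsPolicy π) (t : ℕ) (x : 𝒳) {ν : 𝒳 → ℝ} (hν : ν ∈ subProb 𝒳) :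
    stepQ P π t x ν ∈ simplex 𝒳 := by
  constructor
  · intro x'
    exact Finset.sum_nonneg fun u _ => mul_nonneg ((hπ t x).1 u) ((hP x u ν hν).1 x')
  · unfold stepQ
    rw [Finset.sum_comm]
    simp_rw [← Finset.mul_sum, (hP x _ ν hν).2, mul_one]
    exact (hπ t x).2

lemma stepQ_lip {P : 𝒳 → 𝒰 → (𝒳 → ℝ) → 𝒳 → ℝ} {L : ℝ} (hL : KernelLipschitz P L)
    {π : ℕ → 𝒳 → 𝒰 → ℝ}
    (hπ : IsPolicy π) (t : ℕ) (x : 𝒳) {ν ν' : 𝒳 → ℝ} (hν : ν ∈ subProb 𝒳) (hν' : ν' ∈ subProb 𝒳) :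
    l1dist (stepQ P π t x ν) (stepQ P π t x ν') ≤ L * l1dist ν ν' := by
  unfold l1dist stepQ
  calc ∑ x', |∑ u, π t x u * P x u ν x' - ∑ u, π t x u * P x u ν' x'|
      ≤ ∑ x', ∑ u, π t x u * |P x u ν x' - P x u ν' x'| := by
        refine Finset.sum_le_sum fun x' _ => ?_
        rw [← Finset.sum_sub_distrib]
        refine (Finset.abs_sum_le_sum_abs _ _).trans (Finset.sum_le_sum fun u _ => ?_)
        rw [← mul_sub, abs_mul, abs_of_nonneg ((hπ t x).1 u)]
    _ = ∑ u, π t x u * l1dist (P x u ν) (P x u ν') := by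
        rw [Finset.sum_comm]; simp_rw [← Finset.mul_sum]; rfl
    _ ≤ ∑ u, π t x u * (L * l1dist ν ν') :=
        Finset.sum_le_sum fun u _ => mul_le_mul_of_nonneg_left (hL x u ν ν' hν hν') ((hπ t x).1 u)
    _ = L * l1dist ν ν' := by rw [← Finset.sum_mul, (hπ t x).2, one_mul]

lemma abs_sum_simplex_le {q : 𝒳 → ℝ} (hq : q ∈ simplex 𝒳) {a : 𝒳 → ℝ} {C : ℝ}
    (ha : ∀ x, |a x| ≤ C) : |∑ x, q x * a x| ≤ C := by
  refine (Finset.abs_sum_le_sum_abs _ _).trans ?_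
  calc ∑ x, |q x * a x| ≤ ∑ x, q x * C := Finset.sum_le_sum fun x _ => by
        rw [abs_mul, abs_of_nonneg (hq.1 x)]
        exact mul_le_mul_of_nonneg_left (ha x) (hq.1 x)
    _ = C := by rw [← Finset.sum_mul, hq.2, one_mul]

lemma abs_sum_sub_le {q q' : 𝒳 → ℝ} {a : 𝒳 → ℝ} {C : ℝ}
    (ha : ∀ x, |a x| ≤ C) : |∑ x, q x * a x - ∑ x, q' x * a x| ≤ C * l1dist q q' := by
  rw [← Finset.sum_sub_distrib, l1dist, Finset.mul_sum]
  refine (Finset.abs_sum_le_sum_abs _ _).trans (Finset.sum_le_sum fun x _ => ?_)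
  rw [← sub_mul, abs_mul, mul_comm]
  exact mul_le_mul_of_nonneg_right (ha x) (abs_nonneg _)

variable [DecidableEq 𝒳]

lemma sum_prod_mul {N : ℕ} (q h : Fin N → 𝒳 → ℝ) :
    ∑ Y : Fin N → 𝒳, (∏ j, q j (Y j)) * ∏ j, h j (Y j) = ∏ j, ∑ x, q j x * h j x := by
  simp_rw [← Finset.prod_mul_distrib]
  rw [Finset.prod_univ_sum, Fintype.piFinset_univ]

lemma sum_prod_simplex {N : ℕ} {q : Fin N → 𝒳 → ℝ} (hq : ∀ j, q j ∈ simplex 𝒳) :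
    ∑ Y : Fin N → 𝒳, (∏ j, q j (Y j)) = 1 := by
  have := sum_prod_mul q (fun _ _ => 1)
  simpa [(hq _).2] using this

lemma sum_prod_one {N : ℕ} {q : Fin N → 𝒳 → ℝ} (hq : ∀ j, q j ∈ simplex 𝒳) (i : Fin N)
    (b : 𝒳 → ℝ) :
    ∑ Y : Fin N → 𝒳, (∏ j, q j (Y j)) * b (Y i) = ∑ x, q i x * b x := by
  have := sum_prod_mul q (fun j x => if j = i then b x else 1)
  simp only [Finset.prod_ite_eq', Finset.mem_univ, if_true] at this
  rw [this, Finset.prod_eq_single i]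
  · simp
  · intro j _ hj; simp [hj, (hq j).2]
  · simp

lemma sum_prod_two {N : ℕ} {q : Fin N → 𝒳 → ℝ} (i k : Fin N) (hik : i ≠ k)
    (b c : 𝒳 → ℝ) (hb : ∑ x, q i x * b x = 0) :
    ∑ Y : Fin N → 𝒳, (∏ j, q j (Y j)) * (b (Y i) * c (Y k)) = 0 := by
  have := sum_prod_mul q (fun j x => (if j = i then b x else 1) * (if j = k then c x else 1))
  simp only [Finset.prod_mul_distrib, Finset.prod_ite_eq', Finset.mem_univ, if_true] at this
  rw [this]
  refine Finset.prod_eq_zero (Finset.mem_univ i) ?_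
  simpa [hik] using hb

lemma product_second_moment {N : ℕ} {q : Fin N → 𝒳 → ℝ} (hq : ∀ j, q j ∈ simplex 𝒳)
    {a : Fin N → 𝒳 → ℝ} (ha : ∀ j x, |a j x| ≤ 1) :
    ∑ Y : Fin N → 𝒳, (∏ j, q j (Y j)) * (∑ j, (a j (Y j) - ∑ x, q j x * a j x)) ^ 2 ≤ N := by
  set b : Fin N → 𝒳 → ℝ := fun j x => a j x - ∑ x, q j x * a j x with hb
  have hb0 : ∀ j, ∑ x, q j x * b j x = 0 := by
    intro j
    simp only [hb, mul_sub, Finset.sum_sub_distrib, ← Finset.sum_mul, (hq j).2]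
    ring
  have h1 : ∑ Y : Fin N → 𝒳, (∏ j, q j (Y j)) * (∑ j, b j (Y j)) ^ 2
      = ∑ j, ∑ x, q j x * (b j x) ^ 2 := by
    simp_rw [sq, Finset.sum_mul_sum, Finset.mul_sum]
    rw [Finset.sum_comm]
    refine Finset.sum_congr rfl fun j _ => ?_
    rw [Finset.sum_comm, Finset.sum_eq_single j]
    · exact sum_prod_one hq j (fun x => b j x * b j x)
    · intro k _ hk
      exact sum_prod_two j k hk.symm (b j) (b k) (hb0 j)
    · simp
  have h2 : ∀ j, ∑ x, q j x * (b j x) ^ 2 ≤ 1 := by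
    intro j
    have e : ∑ x, q j x * (b j x) ^ 2 = ∑ x, q j x * (a j x) ^ 2 - (∑ x, q j x * a j x) ^ 2 := by
      have : ∀ x, q j x * (b j x) ^ 2 = q j x * (a j x) ^ 2
          - (∑ x, q j x * a j x) * (q j x * a j x) - (∑ x, q j x * a j x) * (q j x * b j x) := by
        intro x; simp only [hb]; ring
      simp_rw [this, Finset.sum_sub_distrib, ← Finset.mul_sum, hb0 j]
      ring
    have h3 := abs_sum_simplex_le (hq j) (a := fun x => (a j x) ^ 2) (C := 1) (fun x => by
      rw [abs_of_nonneg (sq_nonneg _)]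
      exact (sq_le_one_iff_abs_le_one _).2 (ha j x))
    have := le_abs_self (∑ x, q j x * (a j x) ^ 2)
    nlinarith [sq_nonneg (∑ x, q j x * a j x)]
  calc _ = ∑ j, ∑ x, q j x * (b j x) ^ 2 := h1
    _ ≤ ∑ j : Fin N, (1:ℝ) := Finset.sum_le_sum fun j _ => h2 j
    _ = N := by simp

lemma product_first_moment {N : ℕ} (hN : 0 < N) {q : Fin N → 𝒳 → ℝ} (hq : ∀ j, q j ∈ simplex 𝒳)
    {a : Fin N → 𝒳 → ℝ} (ha : ∀ j x, |a j x| ≤ 1) :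
    ∑ Y : Fin N → 𝒳, (∏ j, q j (Y j)) * |(N:ℝ)⁻¹ * ∑ j, (a j (Y j) - ∑ x, q j x * a j x)|
      ≤ 1 / Real.sqrt N := by
  have hN' : (0:ℝ) < N := by exact_mod_cast hN
  set s := Real.sqrt N with hs
  have hs0 : 0 < s := Real.sqrt_pos.2 hN'
  have hss : s * s = N := Real.mul_self_sqrt hN'.le
  have key : ∀ z : ℝ, |(N:ℝ)⁻¹ * z| ≤ (s / N ^ 2 * z ^ 2 + 1 / s) / 2 := by
    intro z
    rw [← hss, abs_mul, abs_of_nonneg (by positivity), ← sq_abs z]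
    generalize |z| = w
    have : (s / (s * s) ^ 2 * w ^ 2 + 1 / s) / 2 - (s * s)⁻¹ * w = (w - s) ^ 2 / (2 * s ^ 3) := by
      field_simp; ring
    have h : 0 ≤ (w - s) ^ 2 / (2 * s ^ 3) := by positivity
    linarith
  have h2 := product_second_moment hq ha
  calc _ ≤ ∑ Y : Fin N → 𝒳, (∏ j, q j (Y j)) *
        ((s / N ^ 2 * (∑ j, (a j (Y j) - ∑ x, q j x * a j x)) ^ 2 + 1 / s) / 2) :=
        Finset.sum_le_sum fun Y _ => mul_le_mul_of_nonneg_left (key _)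
          (Finset.prod_nonneg fun j _ => (hq j).1 _)
    _ = s / N ^ 2 / 2 * (∑ Y : Fin N → 𝒳, (∏ j, q j (Y j)) *
          (∑ j, (a j (Y j) - ∑ x, q j x * a j x)) ^ 2)
          + (1 / s / 2) * ∑ Y : Fin N → 𝒳, (∏ j, q j (Y j)) := by
        rw [Finset.mul_sum, Finset.mul_sum, ← Finset.sum_add_distrib]
        refine Finset.sum_congr rfl fun Y _ => by ring
    _ ≤ s / N ^ 2 / 2 * N + (1 / s / 2) * 1 := by
        rw [sum_prod_simplex hq]
        gcongr
    _ = 1 / s := by rw [← hss]; field_simp; ring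

lemma empNbhd_subProb {N : ℕ} {ξ : Fin N → Fin N → ℝ} (hξ : IsEdgeWeights ξ) (X : Fin N → 𝒳)
    (i : Fin N) : empNbhd ξ X i ∈ subProb 𝒳 := by
  have hpos : ∀ i j, 0 ≤ ξ i j := fun i j => by rcases hξ.1 i j with h | h <;> simp [h]
  have hle : ∀ i j, ξ i j ≤ 1 := fun i j => by rcases hξ.1 i j with h | h <;> simp [h]
  constructor
  · intro x
    refine mul_nonneg (by positivity) (Finset.sum_nonneg fun j _ => mul_nonneg (hpos _ _) ?_)
    split_ifs <;> norm_num
  · unfold empNbhd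
    rw [← Finset.mul_sum, Finset.sum_comm]
    simp_rw [← Finset.mul_sum]
    simp only [Finset.sum_ite_eq, Finset.mem_univ, if_true, mul_one]
    have : ∑ j, ξ i j ≤ N := by
      calc _ ≤ ∑ j : Fin N, (1:ℝ) := Finset.sum_le_sum fun j _ => hle i j
        _ = N := by simp
    rcases Nat.eq_zero_or_pos N with h | h
    · subst h; simp
    · have hN' : (0:ℝ) < N := by exact_mod_cast h
      rw [inv_mul_le_iff₀ hN']; linarith

/-- Expectation with respect to the joint law. -/
noncomputable def Ex {N : ℕ} (P : 𝒳 → 𝒰 → (𝒳 → ℝ) → 𝒳 → ℝ) (μ0 : 𝒳 → ℝ) (ξ : Fin N → Fin N → ℝ)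
    (πs : Fin N → ℕ → 𝒳 → 𝒰 → ℝ) (t : ℕ) (f : (Fin N → 𝒳) → ℝ) : ℝ :=
  ∑ X : Fin N → 𝒳, jointLaw P μ0 ξ πs t X * f X

variable {N : ℕ} {P : 𝒳 → 𝒰 → (𝒳 → ℝ) → 𝒳 → ℝ} {μ0 : 𝒳 → ℝ} {ξ : Fin N → Fin N → ℝ}
    {πs : Fin N → ℕ → 𝒳 → 𝒰 → ℝ}

lemma Ex_succ (t : ℕ) (f : (Fin N → 𝒳) → ℝ) : Ex P μ0 ξ πs (t+1) f =
    Ex P μ0 ξ πs t (fun X => ∑ Y : Fin N → 𝒳,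
      (∏ j, stepQ P (πs j) t (X j) (empNbhd ξ X j) (Y j)) * f Y) := by
  unfold Ex
  simp only [jointLaw, Finset.sum_mul, Finset.mul_sum]
  rw [Finset.sum_comm]
  refine Finset.sum_congr rfl fun X _ => Finset.sum_congr rfl fun Y _ => ?_
  simp only [stepQ]; ring

lemma Ex_add (t : ℕ) (f g : (Fin N → 𝒳) → ℝ) :
    Ex P μ0 ξ πs t (fun X => f X + g X) = Ex P μ0 ξ πs t f + Ex P μ0 ξ πs t g := by
  simp [Ex, mul_add, Finset.sum_add_distrib]

lemma Ex_sub (t : ℕ) (f g : (Fin N → 𝒳) → ℝ) :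
    Ex P μ0 ξ πs t (fun X => f X - g X) = Ex P μ0 ξ πs t f - Ex P μ0 ξ πs t g := by
  simp [Ex, mul_sub, Finset.sum_sub_distrib]

lemma Ex_smul (t : ℕ) (c : ℝ) (f : (Fin N → 𝒳) → ℝ) :
    Ex P μ0 ξ πs t (fun X => c * f X) = c * Ex P μ0 ξ πs t f := by
  simp only [Ex, Finset.mul_sum]
  exact Finset.sum_congr rfl fun X _ => by ring

lemma Ex_sum {ι : Type*} (s : Finset ι) (t : ℕ) (f : ι → (Fin N → 𝒳) → ℝ) :
    Ex P μ0 ξ πs t (fun X => ∑ k ∈ s, f k X) = ∑ k ∈ s, Ex P μ0 ξ πs t (f k) := by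
  simp only [Ex, Finset.mul_sum]
  rw [Finset.sum_comm]

lemma joint_simplex (hμ0 : μ0 ∈ simplex 𝒳) (hP : IsKernel P) (hξ : IsEdgeWeights ξ)
    (hπ : ∀ j, IsPolicy (πs j)) (t : ℕ) :
    (∀ X, 0 ≤ jointLaw P μ0 ξ πs t X) ∧ Ex P μ0 ξ πs t (fun _ => 1) = 1 := by
  induction t with
  | zero =>
    refine ⟨fun X => Finset.prod_nonneg fun j _ => hμ0.1 _, ?_⟩
    simpa [Ex, jointLaw] using sum_prod_simplex (q := fun _ : Fin N => μ0) (fun _ => hμ0)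
  | succ t ih =>
    have hq : ∀ X : Fin N → 𝒳, ∀ j, stepQ P (πs j) t (X j) (empNbhd ξ X j) ∈ simplex 𝒳 :=
      fun X j => stepQ_simplex hP (hπ j) t _ (empNbhd_subProb hξ X j)
    refine ⟨fun Y => Finset.sum_nonneg fun X _ => mul_nonneg (ih.1 X)
      (Finset.prod_nonneg fun j _ => (hq X j).1 _), ?_⟩
    rw [Ex_succ]
    simp only [mul_one, sum_prod_simplex (hq _)]
    exact ih.2

lemma Ex_mono (hμ0 : μ0 ∈ simplex 𝒳) (hP : IsKernel P) (hξ : IsEdgeWeights ξ)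
    (hπ : ∀ j, IsPolicy (πs j)) (t : ℕ) {f g : (Fin N → 𝒳) → ℝ} (h : ∀ X, f X ≤ g X) :
    Ex P μ0 ξ πs t f ≤ Ex P μ0 ξ πs t g :=
  Finset.sum_le_sum fun X _ =>
    mul_le_mul_of_nonneg_left (h X) ((joint_simplex hμ0 hP hξ hπ t).1 X)

lemma Ex_const (hμ0 : μ0 ∈ simplex 𝒳) (hP : IsKernel P) (hξ : IsEdgeWeights ξ)
    (hπ : ∀ j, IsPolicy (πs j)) (t : ℕ) (c : ℝ) :
    Ex P μ0 ξ πs t (fun _ => c) = c := by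
  have := Ex_smul (P := P) (μ0 := μ0) (ξ := ξ) (πs := πs) t c (fun _ => 1)
  simpa [(joint_simplex hμ0 hP hξ hπ t).2] using this

lemma abs_Ex_le (hμ0 : μ0 ∈ simplex 𝒳) (hP : IsKernel P) (hξ : IsEdgeWeights ξ)
    (hπ : ∀ j, IsPolicy (πs j)) (t : ℕ) (f : (Fin N → 𝒳) → ℝ) :
    |Ex P μ0 ξ πs t f| ≤ Ex P μ0 ξ πs t (fun X => |f X|) := by
  refine (Finset.abs_sum_le_sum_abs _ _).trans (Finset.sum_le_sum fun X _ => ?_)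
  rw [abs_mul, abs_of_nonneg ((joint_simplex hμ0 hP hξ hπ t).1 X)]

end partA


section partA2

variable {𝒳 𝒰 : Type*} [Fintype 𝒳] [Fintype 𝒰] [DecidableEq 𝒳]

/-- Deterministic neighborhood approximation error of agent `j`. -/
noncomputable def eN {N : ℕ} (ξ : Fin N → Fin N → ℝ) (m : Fin N → 𝒳 → ℝ) (G : 𝒳 → ℝ)
    (j : Fin N) : ℝ := ∑ x, |(N:ℝ)⁻¹ * ∑ k, ξ j k * m k x - G x|

/-- Recursive bound for the law of large numbers error. -/
noncomputable def dl (L c s n : ℝ) (A : ℕ → ℝ) : ℕ → ℝ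
  | 0 => s
  | (t+1) => s + L * (c * dl L c s n A t + A t) + dl L c s n A t + n

variable {N : ℕ} {P : 𝒳 → 𝒰 → (𝒳 → ℝ) → 𝒳 → ℝ} {μ0 : 𝒳 → ℝ} {ξ : Fin N → Fin N → ℝ}
    {πs : Fin N → ℕ → 𝒳 → 𝒰 → ℝ}

lemma Ex_nbhd_le (hμ0 : μ0 ∈ simplex 𝒳) (hP : IsKernel P) (hξ : IsEdgeWeights ξ)
    (hπ : ∀ j, IsPolicy (πs j)) (t : ℕ) {δ : ℝ} (m : Fin N → 𝒳 → ℝ) (G : 𝒳 → ℝ)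
    (hδ : ∀ a : Fin N → 𝒳 → ℝ, (∀ j x, |a j x| ≤ 1) →
      Ex P μ0 ξ πs t (fun X => |(N:ℝ)⁻¹ * ∑ j, (a j (X j) - ∑ x, m j x * a j x)|) ≤ δ)
    (j : Fin N) :
    Ex P μ0 ξ πs t (fun X => l1dist (empNbhd ξ X j) G) ≤ Fintype.card 𝒳 * δ + eN ξ m G j := by
  have hab : ∀ x : 𝒳, ∀ (k : Fin N) (y : 𝒳), |ξ j k * (if y = x then (1:ℝ) else 0)| ≤ 1 := by
    intro x k y
    rcases hξ.1 j k with h | h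
    · simp [h]
    · rw [h]; split_ifs <;> simp
  have h1 : ∀ X : Fin N → 𝒳, l1dist (empNbhd ξ X j) G ≤
      ∑ x, |(N:ℝ)⁻¹ * ∑ k, (ξ j k * (if X k = x then (1:ℝ) else 0)
        - ∑ y, m k y * (ξ j k * (if y = x then (1:ℝ) else 0)))| + eN ξ m G j := by
    intro X
    unfold l1dist eN
    rw [← Finset.sum_add_distrib]
    refine Finset.sum_le_sum fun x _ => ?_
    refine le_trans (le_of_eq ?_) (abs_add_le _ _)
    congr 1
    have e : ∀ k, ∑ y, m k y * (ξ j k * (if y = x then (1:ℝ) else 0)) = ξ j k * m k x := by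
      intro k
      rw [Finset.sum_eq_single x]
      · simp [mul_comm]
      · intro y _ hy; simp [hy]
      · simp
    simp only [e, empNbhd, Finset.sum_sub_distrib]
    ring
  refine (Ex_mono hμ0 hP hξ hπ t h1).trans ?_
  have h2 : ∀ x : 𝒳, Ex P μ0 ξ πs t (fun X =>
      |(N:ℝ)⁻¹ * ∑ k, (ξ j k * (if X k = x then (1:ℝ) else 0)
        - ∑ y, m k y * (ξ j k * (if y = x then (1:ℝ) else 0)))|) ≤ δ := fun x =>
    hδ (fun k y => ξ j k * (if y = x then (1:ℝ) else 0)) (hab x)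
  have h3 := Finset.sum_le_sum fun x (_ : x ∈ (Finset.univ : Finset 𝒳)) => h2 x
  rw [← Ex_sum] at h3
  rw [Ex_add, Ex_const hμ0 hP hξ hπ]
  refine add_le_add (h3.trans (le_of_eq ?_)) le_rfl
  simp

lemma propagate (hN : 0 < N) (hμ0 : μ0 ∈ simplex 𝒳) (hP : IsKernel P) (hξ : IsEdgeWeights ξ)
    (hπ : ∀ j, IsPolicy (πs j)) {L : ℝ} (hL0 : 0 ≤ L) (hL : KernelLipschitz P L)
    (m G : ℕ → Fin N → 𝒳 → ℝ) (hm : ∀ t j, m t j ∈ simplex 𝒳) (hG : ∀ t j, G t j ∈ subProb 𝒳)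
    (i : Fin N) (hm0 : ∀ j, m 0 j = μ0)
    (hrec : ∀ t j x', j ≠ i → m (t+1) j x' = ∑ x, m t j x * stepQ P (πs j) t x (G t j) x')
    (t : ℕ) : ∀ a : Fin N → 𝒳 → ℝ, (∀ j x, |a j x| ≤ 1) →
      Ex P μ0 ξ πs t (fun X => |(N:ℝ)⁻¹ * ∑ j, (a j (X j) - ∑ x, m t j x * a j x)|) ≤
      dl L (Fintype.card 𝒳) (1 / Real.sqrt N) (2 / N)
        (fun t => (N:ℝ)⁻¹ * ∑ j, eN ξ (m t) (G t j) j) t := by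
  have hN' : (0:ℝ) < N := by exact_mod_cast hN
  induction t with
  | zero =>
    intro a ha
    simp only [hm0, dl]
    exact product_first_moment hN (q := fun _ => μ0) (fun _ => hμ0) ha
  | succ t ih =>
    intro a ha
    set δ := dl L (Fintype.card 𝒳) (1 / Real.sqrt N) (2 / N)
        (fun t => (N:ℝ)⁻¹ * ∑ j, eN ξ (m t) (G t j) j) t with hδ
    have hq : ∀ X : Fin N → 𝒳, ∀ j, stepQ P (πs j) t (X j) (empNbhd ξ X j) ∈ simplex 𝒳 :=
      fun X j => stepQ_simplex hP (hπ j) t _ (empNbhd_subProb hξ X j)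
    rw [Ex_succ]
    set b : Fin N → 𝒳 → ℝ := fun j x => ∑ x', stepQ P (πs j) t x (G t j) x' * a j x' with hb
    have hb1 : ∀ j x, |b j x| ≤ 1 := fun j x =>
      abs_sum_simplex_le (stepQ_simplex hP (hπ j) t x (hG t j)) (ha j)
    -- deterministic bound for the deviating agent
    have hdet : |(N:ℝ)⁻¹ * ∑ j, (∑ x, m t j x * b j x - ∑ x, m (t+1) j x * a j x)| ≤ 2 / N := by
      have hz : ∀ j, j ≠ i → ∑ x, m t j x * b j x - ∑ x, m (t+1) j x * a j x = 0 := by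
        intro j hj
        simp only [hrec t j _ hj, hb, Finset.mul_sum, Finset.sum_mul]
        rw [Finset.sum_comm, sub_eq_zero]
        exact Finset.sum_congr rfl fun x _ => Finset.sum_congr rfl fun y _ => by ring
      rw [Finset.sum_eq_single i (fun j _ hj => hz j hj) (by simp), abs_mul,
        abs_of_nonneg (by positivity : (0:ℝ) ≤ (N:ℝ)⁻¹), inv_mul_eq_div]
      gcongr
      have h1 := abs_sum_simplex_le (hm t i) (hb1 i)
      have h2 := abs_sum_simplex_le (hm (t+1) i) (ha i)
      exact (abs_sub _ _).trans (by linarith)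
    have hX : ∀ X : Fin N → 𝒳, ∑ Y : Fin N → 𝒳,
        (∏ j, stepQ P (πs j) t (X j) (empNbhd ξ X j) (Y j)) *
          |(N:ℝ)⁻¹ * ∑ j, (a j (Y j) - ∑ x, m (t+1) j x * a j x)|
        ≤ (1 / Real.sqrt N + 2 / N) + (((N:ℝ)⁻¹ * ∑ j, L * l1dist (empNbhd ξ X j) (G t j)) +
          |(N:ℝ)⁻¹ * ∑ j, (b j (X j) - ∑ x, m t j x * b j x)|) := by
      intro X
      set q : Fin N → 𝒳 → ℝ := fun j => stepQ P (πs j) t (X j) (empNbhd ξ X j) with hqdef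
      set R : ℝ := |(N:ℝ)⁻¹ * ∑ j, (∑ x, q j x * a j x - ∑ x, m (t+1) j x * a j x)| with hR
      have hpt : ∀ Y : Fin N → 𝒳, |(N:ℝ)⁻¹ * ∑ j, (a j (Y j) - ∑ x, m (t+1) j x * a j x)| ≤
          |(N:ℝ)⁻¹ * ∑ j, (a j (Y j) - ∑ x, q j x * a j x)| + R := by
        intro Y
        refine le_trans (le_of_eq ?_) (abs_add_le _ _)
        congr 1
        simp only [Finset.sum_sub_distrib]; ring
      have hRb : R ≤ (N:ℝ)⁻¹ * ∑ j, L * l1dist (empNbhd ξ X j) (G t j) +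
          |(N:ℝ)⁻¹ * ∑ j, (b j (X j) - ∑ x, m t j x * b j x)| + 2 / N := by
        have e : (N:ℝ)⁻¹ * ∑ j, (∑ x, q j x * a j x - ∑ x, m (t+1) j x * a j x) =
            (N:ℝ)⁻¹ * ∑ j, (∑ x, q j x * a j x - b j (X j)) +
            (N:ℝ)⁻¹ * ∑ j, (b j (X j) - ∑ x, m t j x * b j x) +
            (N:ℝ)⁻¹ * ∑ j, (∑ x, m t j x * b j x - ∑ x, m (t+1) j x * a j x) := by
          simp only [Finset.sum_sub_distrib]; ring
        rw [hR, e]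
        refine (abs_add_le _ _).trans (add_le_add ((abs_add_le _ _).trans
          (add_le_add ?_ le_rfl)) hdet)
        rw [abs_mul, abs_of_nonneg (by positivity : (0:ℝ) ≤ (N:ℝ)⁻¹)]
        gcongr
        refine (Finset.abs_sum_le_sum_abs _ _).trans (Finset.sum_le_sum fun j _ => ?_)
        refine (abs_sum_sub_le (ha j)).trans ?_
        rw [one_mul]
        exact stepQ_lip hL (hπ j) t (X j) (empNbhd_subProb hξ X j) (hG t j)
      calc _ ≤ ∑ Y : Fin N → 𝒳, (∏ j, q j (Y j)) *
              (|(N:ℝ)⁻¹ * ∑ j, (a j (Y j) - ∑ x, q j x * a j x)| + R) :=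
            Finset.sum_le_sum fun Y _ => mul_le_mul_of_nonneg_left (hpt Y)
              (Finset.prod_nonneg fun j _ => (hq X j).1 _)
        _ = ∑ Y : Fin N → 𝒳, (∏ j, q j (Y j)) *
              |(N:ℝ)⁻¹ * ∑ j, (a j (Y j) - ∑ x, q j x * a j x)| + R := by
            simp only [mul_add, Finset.sum_add_distrib, ← Finset.sum_mul,
              sum_prod_simplex (hq X), hqdef, one_mul]
        _ ≤ 1 / Real.sqrt N + R := by
            gcongr
            exact product_first_moment hN (hq X) ha
        _ ≤ _ := by linarith
    refine (Ex_mono hμ0 hP hξ hπ t hX).trans ?_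
    rw [Ex_add, Ex_const hμ0 hP hξ hπ, Ex_add, Ex_smul, Ex_sum]
    simp only [Ex_smul]
    have h1 := ih b hb1
    have h2 : (N:ℝ)⁻¹ * ∑ j, L * Ex P μ0 ξ πs t (fun X => l1dist (empNbhd ξ X j) (G t j)) ≤
        L * (Fintype.card 𝒳 * δ + (N:ℝ)⁻¹ * ∑ j, eN ξ (m t) (G t j) j) := by
      calc _ ≤ (N:ℝ)⁻¹ * ∑ j, L * (Fintype.card 𝒳 * δ + eN ξ (m t) (G t j) j) := by
            gcongr with j _
            exact Ex_nbhd_le hμ0 hP hξ hπ t (m t) (G t j) ih j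
        _ = _ := by
            rw [← Finset.mul_sum, Finset.sum_add_distrib]
            simp only [Finset.sum_const, Finset.card_univ, Fintype.card_fin, nsmul_eq_mul]
            field_simp
    simp only [dl]
    linarith

/-- Bound for the deviating agent. -/
lemma deviating_bound (hN : 0 < N) (hμ0 : μ0 ∈ simplex 𝒳) (hP : IsKernel P) (hξ : IsEdgeWeights ξ)
    (hπ : ∀ j, IsPolicy (πs j)) {L : ℝ} (hL0 : 0 ≤ L) (hL : KernelLipschitz P L)
    (m G : ℕ → Fin N → 𝒳 → ℝ) (hm : ∀ t j, m t j ∈ simplex 𝒳) (hG : ∀ t j, G t j ∈ subProb 𝒳)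
    (i : Fin N) (hm0 : ∀ j, m 0 j = μ0)
    (hrec : ∀ t j x', j ≠ i → m (t+1) j x' = ∑ x, m t j x * stepQ P (πs j) t x (G t j) x')
    {C : ℝ} (hC : 0 ≤ C)
    (t : ℕ) : ∀ g : 𝒳 → ℝ, (∀ x, |g x| ≤ C) →
      |Ex P μ0 ξ πs t (fun X => g (X i)) - ∑ x, stateLaw P μ0 (fun s => G s i) (πs i) t x * g x| ≤
      C * L * ∑ s ∈ Finset.range t, (Fintype.card 𝒳 *
        dl L (Fintype.card 𝒳) (1 / Real.sqrt N) (2 / N)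
          (fun t => (N:ℝ)⁻¹ * ∑ j, eN ξ (m t) (G t j) j) s + eN ξ (m s) (G s i) i) := by
  induction t with
  | zero =>
    intro g hg
    have := sum_prod_one (q := fun _ : Fin N => μ0) (fun _ => hμ0) i g
    simp [Ex, jointLaw, stateLaw, this]
  | succ t ih =>
    intro g hg
    have hq : ∀ X : Fin N → 𝒳, ∀ j, stepQ P (πs j) t (X j) (empNbhd ξ X j) ∈ simplex 𝒳 :=
      fun X j => stepQ_simplex hP (hπ j) t _ (empNbhd_subProb hξ X j)
    set b : 𝒳 → ℝ := fun x => ∑ x', stepQ P (πs i) t x (G t i) x' * g x' with hb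
    have hb1 : ∀ x, |b x| ≤ C := fun x =>
      abs_sum_simplex_le (stepQ_simplex hP (hπ i) t x (hG t i)) hg
    have hlaw : ∑ x, stateLaw P μ0 (fun s => G s i) (πs i) (t+1) x * g x =
        ∑ x, stateLaw P μ0 (fun s => G s i) (πs i) t x * b x := by
      simp only [stateLaw, hb, stepQ]
      simp only [Finset.sum_mul (s := (Finset.univ : Finset 𝒳)), Finset.mul_sum (s := (Finset.univ : Finset 𝒳))]
      rw [Finset.sum_comm]
      exact Finset.sum_congr rfl fun x _ => Finset.sum_congr rfl fun y _ => by ring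
    rw [hlaw, Ex_succ]
    simp only [sum_prod_one (hq _) i g]
    rw [Finset.sum_range_succ, mul_add]
    have h1 := ih b hb1
    have h2 : |Ex P μ0 ξ πs t (fun X => ∑ x, stepQ P (πs i) t (X i) (empNbhd ξ X i) x * g x) -
        Ex P μ0 ξ πs t (fun X => b (X i))| ≤ C * L * (Fintype.card 𝒳 *
        dl L (Fintype.card 𝒳) (1 / Real.sqrt N) (2 / N)
          (fun t => (N:ℝ)⁻¹ * ∑ j, eN ξ (m t) (G t j) j) t + eN ξ (m t) (G t i) i) := by
      rw [← Ex_sub]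
      refine (abs_Ex_le hμ0 hP hξ hπ t _).trans ?_
      refine (Ex_mono hμ0 hP hξ hπ t (g := fun X => C * L * l1dist (empNbhd ξ X i) (G t i))
        fun X => ?_).trans ?_
      · refine (abs_sum_sub_le hg).trans ?_
        rw [mul_assoc]
        exact mul_le_mul_of_nonneg_left
          (stepQ_lip hL (hπ i) t (X i) (empNbhd_subProb hξ X i) (hG t i)) hC
      · rw [Ex_smul]
        refine mul_le_mul_of_nonneg_left ?_ (mul_nonneg hC hL0)
        exact Ex_nbhd_le hμ0 hP hξ hπ t (m t) (G t i)
          (propagate hN hμ0 hP hξ hπ hL0 hL m G hm hG i hm0 hrec t) i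
    have h3 := abs_sub_le (Ex P μ0 ξ πs t (fun X => ∑ x, stepQ P (πs i) t (X i) (empNbhd ξ X i) x * g x))
      (Ex P μ0 ξ πs t (fun X => b (X i)))
      (∑ x, stateLaw P μ0 (fun s => G s i) (πs i) t x * b x)
    linarith

end partA2

section partB

lemma integrableOn_of_bdd {f : ℝ → ℝ} (hf : Measurable f) {C : ℝ}
    (hb : ∀ β ∈ Set.Ioc (0:ℝ) 1, |f β| ≤ C) : IntegrableOn f (Set.Ioc (0:ℝ) 1) := by
  refine Measure.integrableOn_of_bounded (M := C) (by simp) hf.aestronglyMeasurable ?_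
  filter_upwards [ae_restrict_mem measurableSet_Ioc] with β hβ
  exact hb β hβ

lemma abs_setIntegral_le {f : ℝ → ℝ} {C : ℝ}
    (hb : ∀ β ∈ Set.Ioc (0:ℝ) 1, |f β| ≤ C) : |∫ β in Set.Ioc (0:ℝ) 1, f β| ≤ C := by
  have := norm_setIntegral_le_of_norm_le_const (μ := volume) (s := Set.Ioc (0:ℝ) 1) (f := f) (C := C)
    (by simp) (fun β hβ => hb β hβ)
  simpa using this

lemma graphon_meas {W : ℝ → ℝ → ℝ} (hW : IsGraphon W) (α : ℝ) : Measurable (W α) :=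
  hW.1.comp (measurable_const.prodMk measurable_id)

lemma Ioc_sub_Icc {β : ℝ} (h : β ∈ Set.Ioc (0:ℝ) 1) : β ∈ Set.Icc (0:ℝ) 1 := ⟨h.1.le, h.2⟩

lemma W_mul_bdd {W : ℝ → ℝ → ℝ} (hW : IsGraphon W) {f : ℝ → ℝ}
    (hb : ∀ β ∈ Set.Ioc (0:ℝ) 1, |f β| ≤ 1) (α : ℝ) :
    ∀ β ∈ Set.Ioc (0:ℝ) 1, |W α β * f β| ≤ 1 := by
  intro β hβ
  rw [abs_mul]
  have h1 := (hW.2.2 α β)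
  rw [abs_of_nonneg h1.1]
  exact mul_le_one₀ h1.2 (abs_nonneg _) (hb β hβ)

lemma W_mul_integrable {W : ℝ → ℝ → ℝ} (hW : IsGraphon W) {f : ℝ → ℝ} (hf : Measurable f)
    (hb : ∀ β ∈ Set.Ioc (0:ℝ) 1, |f β| ≤ 1) (α : ℝ) :
    Integrable (fun β => W α β * f β) (volume.restrict (Set.Ioc (0:ℝ) 1)) :=
  integrableOn_of_bdd ((graphon_meas hW α).mul hf) (W_mul_bdd hW hb α)

lemma W_integral_lip {W : ℝ → ℝ → ℝ} {LW : ℝ} (hW : IsGraphon W) (hWL : GraphonLipschitz W LW)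
    {f : ℝ → ℝ} (hf : Measurable f) (hb : ∀ β ∈ Set.Ioc (0:ℝ) 1, |f β| ≤ 1) {α α' : ℝ}
    (hα : α ∈ Set.Icc (0:ℝ) 1) (hα' : α' ∈ Set.Icc (0:ℝ) 1) :
    |(∫ β in Set.Ioc (0:ℝ) 1, W α β * f β) - ∫ β in Set.Ioc (0:ℝ) 1, W α' β * f β|
      ≤ |LW| * |α - α'| := by
  rw [← integral_sub (W_mul_integrable hW hf hb α) (W_mul_integrable hW hf hb α')]
  refine abs_setIntegral_le fun β hβ => ?_
  rw [← sub_mul, abs_mul]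
  have h1 := hWL α β α' β hα (Ioc_sub_Icc hβ) hα' (Ioc_sub_Icc hβ)
  simp only [sub_self, abs_zero, add_zero] at h1
  have h2 : LW * |α - α'| ≤ |LW| * |α - α'| :=
    mul_le_mul_of_nonneg_right (le_abs_self _) (abs_nonneg _)
  calc _ ≤ |W α β - W α' β| * 1 := mul_le_mul_of_nonneg_left (hb β hβ) (abs_nonneg _)
    _ ≤ _ := by linarith

variable {𝒳 𝒰 : Type*} [Fintype 𝒳] [Fintype 𝒰]

lemma simplex_abs_le {q : 𝒳 → ℝ} (hq : q ∈ simplex 𝒳) (x : 𝒳) : |q x| ≤ 1 := by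
  rw [abs_of_nonneg (hq.1 x), ← hq.2]
  exact Finset.single_le_sum (fun y _ => hq.1 y) (Finset.mem_univ x)

lemma nbhd_subProb {W : ℝ → ℝ → ℝ} (hW : IsGraphon W) {ν : ℝ → 𝒳 → ℝ}
    (hm : ∀ x, Measurable fun β => ν β x) (hν : ∀ β ∈ Set.Icc (0:ℝ) 1, ν β ∈ simplex 𝒳) (α : ℝ) :
    nbhd W ν α ∈ subProb 𝒳 := by
  constructor
  · intro x
    refine setIntegral_nonneg measurableSet_Ioc fun β hβ => ?_
    exact mul_nonneg (hW.2.2 α β).1 ((hν β (Ioc_sub_Icc hβ)).1 x)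
  · unfold nbhd
    rw [← integral_finsetSum _ (fun x _ => W_mul_integrable hW (hm x)
      (fun β hβ => simplex_abs_le (hν β (Ioc_sub_Icc hβ)) x) α)]
    refine (le_abs_self _).trans (abs_setIntegral_le fun β hβ => ?_)
    rw [← Finset.mul_sum, (hν β (Ioc_sub_Icc hβ)).2, mul_one, abs_of_nonneg (hW.2.2 α β).1]
    exact (hW.2.2 α β).2

lemma mf_simplex {W : ℝ → ℝ → ℝ} (hW : IsGraphon W) {μ0 : 𝒳 → ℝ} (hμ0 : μ0 ∈ simplex 𝒳)
    {P : 𝒳 → 𝒰 → (𝒳 → ℝ) → 𝒳 → ℝ} (hP : IsKernel P) {πe : ℝ → ℕ → 𝒳 → 𝒰 → ℝ}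
    (hπe : ∀ α ∈ Set.Icc (0:ℝ) 1, IsPolicy (πe α))
    {μ : ℕ → ℝ → 𝒳 → ℝ} (hμ : IsMeanFieldOf W P μ0 πe μ) (t : ℕ) :
    ∀ α ∈ Set.Icc (0:ℝ) 1, μ t α ∈ simplex 𝒳 := by
  induction t with
  | zero => intro α hα; rw [hμ.2.1 α hα]; exact hμ0
  | succ t ih =>
    intro α hα
    have hq := fun x => stepQ_simplex hP (hπe α hα) t x (nbhd_subProb hW (hμ.1 t) ih α)
    constructor
    · intro x'
      rw [hμ.2.2 t α hα]
      exact Finset.sum_nonneg fun x _ => mul_nonneg ((ih α hα).1 x) ((hq x).1 x')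
    · simp only [hμ.2.2 t α hα]
      rw [Finset.sum_comm]
      simp only [← Finset.mul_sum]
      have : ∀ x, ∑ x', ∑ u, πe α t x u * P x u (nbhd W (μ t) α) x' = 1 := fun x => (hq x).2
      simp only [this, mul_one]
      exact (ih α hα).2

lemma mf_continuousAt {W : ℝ → ℝ → ℝ} {LW : ℝ} (hW : IsGraphon W) (hWL : GraphonLipschitz W LW)
    {μ0 : 𝒳 → ℝ} (hμ0 : μ0 ∈ simplex 𝒳)
    {P : 𝒳 → 𝒰 → (𝒳 → ℝ) → 𝒳 → ℝ} (hP : IsKernel P) {LP : ℝ} (hPL : KernelLipschitz P LP)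
    (hLP : 0 ≤ LP)
    {πe : ℝ → ℕ → 𝒳 → 𝒰 → ℝ}
    (hπe : ∀ α ∈ Set.Icc (0:ℝ) 1, IsPolicy (πe α))
    {μ : ℕ → ℝ → 𝒳 → ℝ} (hμ : IsMeanFieldOf W P μ0 πe μ) {L : ℝ} {D : Finset ℝ}
    (hD : ∀ (t : ℕ) (x : 𝒳) (u : 𝒰),
    ∀ α ∈ Set.Icc (0:ℝ) 1, ∀ β ∈ Set.Icc (0:ℝ) 1,
      (∀ d ∈ D, d ∉ Set.uIcc α β) → |πe α t x u - πe β t x u| ≤ L * |α - β|)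
    {β : ℝ} (hβ : β ∈ Set.Ioo (0:ℝ) 1) (hβD : β ∉ D) (t : ℕ) :
    ∀ x, ContinuousAt (fun α => μ t α x) β := by
  have hI : ∀ᶠ α in nhds β, α ∈ Set.Icc (0:ℝ) 1 := by
    filter_upwards [Ioo_mem_nhds hβ.1 hβ.2] with α hα using Set.Ioo_subset_Icc_self hα
  have hβI : β ∈ Set.Icc (0:ℝ) 1 := Set.Ioo_subset_Icc_self hβ
  have hπc : ∀ t x u, ContinuousAt (fun α => πe α t x u) β := by
    intro t x u
    have hop : ((D : Set ℝ)ᶜ) ∈ nhds β :=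
      (D.finite_toSet.isClosed.isOpen_compl).mem_nhds (by simpa using hβD)
    obtain ⟨r, hr, hball⟩ := Metric.mem_nhds_iff.1 hop
    have hlim : Tendsto (fun α => L * |α - β|) (nhds β) (nhds 0) := by
      have : ContinuousAt (fun α => L * |α - β|) β := by fun_prop
      simpa [ContinuousAt] using this
    rw [ContinuousAt, tendsto_iff_dist_tendsto_zero]
    refine squeeze_zero' (Eventually.of_forall fun _ => dist_nonneg) ?_ hlim
    filter_upwards [hI, Metric.ball_mem_nhds β hr] with α hα hα2
    rw [Real.dist_eq]
    refine hD t x u α hα β hβI fun d hd hd2 => ?_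
    have : d ∈ Metric.ball β r := by
      have hc := (convex_ball β r).ordConnected
      exact hc.uIcc_subset hα2 (Metric.mem_ball_self hr) hd2
    exact hball this hd
  induction t with
  | zero =>
    intro x
    have : (fun α => μ 0 α x) =ᶠ[nhds β] fun _ => μ0 x := by
      filter_upwards [hI] with α hα
      rw [hμ.2.1 α hα]
    exact continuousAt_const.congr this.symm
  | succ t ih =>
    intro x'
    have hs := mf_simplex hW hμ0 hP hπe hμ t
    have hG := nbhd_subProb hW (hμ.1 t) hs
    have hPc : ∀ x u, ContinuousAt (fun α => P x u (nbhd W (μ t) α) x') β := by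
      intro x u
      have hlim : Tendsto (fun α => LP * ∑ _y : 𝒳, |LW| * |α - β|) (nhds β) (nhds 0) := by
        have : ContinuousAt (fun α => LP * ∑ _y : 𝒳, |LW| * |α - β|) β := by fun_prop
        simpa [ContinuousAt] using this
      rw [ContinuousAt, tendsto_iff_dist_tendsto_zero]
      refine squeeze_zero' (Eventually.of_forall fun _ => dist_nonneg) ?_ hlim
      filter_upwards [hI] with α hα
      rw [Real.dist_eq]
      calc _ ≤ l1dist (P x u (nbhd W (μ t) α)) (P x u (nbhd W (μ t) β)) :=
            Finset.single_le_sum (f := fun y => |P x u (nbhd W (μ t) α) y - P x u (nbhd W (μ t) β) y|)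
              (fun y _ => abs_nonneg _) (Finset.mem_univ x')
        _ ≤ LP * l1dist (nbhd W (μ t) α) (nbhd W (μ t) β) := hPL x u _ _ (hG α) (hG β)
        _ ≤ _ := by
            refine mul_le_mul_of_nonneg_left (Finset.sum_le_sum fun y _ => ?_) hLP
            exact W_integral_lip hW hWL (hμ.1 t y)
              (fun γ hγ => simplex_abs_le (hs γ (Ioc_sub_Icc hγ)) y) hα hβI
    have : (fun α => μ (t+1) α x') =ᶠ[nhds β] fun α =>
        ∑ x, μ t α x * ∑ u, πe α t x u * P x u (nbhd W (μ t) α) x' := by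
      filter_upwards [hI] with α hα
      exact hμ.2.2 t α hα x'
    refine ContinuousAt.congr ?_ this.symm
    refine tendsto_finsetSum _ fun x _ => (ih x).mul (tendsto_finsetSum _ fun u _ => ?_)
    exact (hπc t x u).mul (hPc x u)

lemma block_sum {N : ℕ} (hN : 0 < N) {f : ℝ → ℝ} (hf : IntegrableOn f (Set.Ioc (0:ℝ) 1)) :
    ∫ β in Set.Ioc (0:ℝ) 1, f β =
      ∑ j : Fin N, ∫ β in Set.Ioc (((j : ℕ) : ℝ) / N) ((((j : ℕ) : ℝ) + 1) / N), f β := by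
  have hN' : (0:ℝ) < N := by exact_mod_cast hN
  have h := intervalIntegral.sum_integral_adjacent_intervals (f := f) (μ := volume)
    (a := fun k : ℕ => (k:ℝ) / N) (n := N) (fun k hk => by
      have hle : (k:ℝ) / N ≤ ((k+1 : ℕ):ℝ) / N := by gcongr; simp
      rw [intervalIntegrable_iff_integrableOn_Ioc_of_le hle]
      refine hf.mono_set (Set.Ioc_subset_Ioc (by positivity) ?_)
      rw [div_le_one hN']
      exact_mod_cast hk)
  simp only [Nat.cast_zero, zero_div, div_self hN'.ne'] at h
  rw [← intervalIntegral.integral_of_le zero_le_one, ← h, Finset.sum_range]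
  refine Finset.sum_congr rfl fun j _ => ?_
  rw [intervalIntegral.integral_of_le (by gcongr; simp)]
  push_cast; rfl

lemma block_const {N : ℕ} (hN : 0 < N) (j : ℕ) {f : ℝ → ℝ} {c : ℝ}
    (h : ∀ β ∈ Set.Ioc ((j : ℝ) / N) (((j : ℝ) + 1) / N), f β = c) :
    ∫ β in Set.Ioc ((j : ℝ) / N) (((j : ℝ) + 1) / N), f β = (N:ℝ)⁻¹ * c := by
  have hN' : (0:ℝ) < N := by exact_mod_cast hN
  rw [setIntegral_congr_fun measurableSet_Ioc h]
  have e : ((j : ℝ) + 1) / N - j / N = (N:ℝ)⁻¹ := by field_simp; ring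
  simp [Measure.real, Real.volume_Ioc, e]

lemma block_sub {N : ℕ} (hN : 0 < N) (j : Fin N) {β : ℝ}
    (h : β ∈ Set.Ioc (((j : ℕ) : ℝ) / N) ((((j : ℕ) : ℝ) + 1) / N)) : β ∈ Set.Ioc (0:ℝ) 1 := by
  have hN' : (0:ℝ) < N := by exact_mod_cast hN
  refine ⟨lt_of_le_of_lt (by positivity) h.1, h.2.trans ?_⟩
  rw [div_le_one hN']
  exact_mod_cast j.2

lemma block_ceil {N : ℕ} (hN : 0 < N) (j : ℕ) {β : ℝ}
    (h : β ∈ Set.Ioc ((j : ℝ) / N) (((j : ℝ) + 1) / N)) :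
    ((⌈(N:ℝ) * β⌉ : ℤ) : ℝ) = (j:ℝ) + 1 := by
  have hN' : (0:ℝ) < N := by exact_mod_cast hN
  have : ⌈(N:ℝ) * β⌉ = (j:ℤ) + 1 := by
    rw [Int.ceil_eq_iff]
    have h1 := h.1; have h2 := h.2
    rw [div_lt_iff₀ hN'] at h1
    rw [le_div_iff₀ hN'] at h2
    push_cast
    constructor <;> linarith
  rw [this]; push_cast; rfl

lemma stepGraphon_block {N : ℕ} (hN : 0 < N) (ξ : Fin N → Fin N → ℝ) (j k : Fin N) {α β : ℝ}
    (hα : α ∈ Set.Ioc (((j : ℕ) : ℝ) / N) ((((j : ℕ) : ℝ) + 1) / N))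
    (hβ : β ∈ Set.Ioc (((k : ℕ) : ℝ) / N) ((((k : ℕ) : ℝ) + 1) / N)) :
    stepGraphon ξ α β = ξ j k := by
  have huniq : ∀ (a : ℝ) (j l : Fin N), a ∈ Set.Ioc (((j : ℕ) : ℝ) / N) ((((j : ℕ) : ℝ) + 1) / N) →
      (((l : ℕ) : ℝ) / N < a ∧ a ≤ (((l : ℕ) : ℝ) + 1) / N) → l = j := by
    intro a j l h h'
    have h1 := block_ceil hN j h
    have h2 := block_ceil hN l (β := a) h'
    rw [h1] at h2
    have : (j:ℕ) = (l:ℕ) := by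
      have : ((j:ℕ):ℝ) = ((l:ℕ):ℝ) := by linarith
      exact_mod_cast this
    exact (Fin.ext this).symm
  unfold stepGraphon
  rw [Finset.sum_eq_single j, Finset.sum_eq_single k]
  · rw [if_pos ⟨hα.1, hα.2⟩, if_pos ⟨hβ.1, hβ.2⟩]; simp
  · intro l _ hl
    rw [if_neg (fun h => hl (huniq β k l hβ h)) (c := ((l : ℕ) : ℝ) / N < β ∧ β ≤ (((l : ℕ) : ℝ) + 1) / N)]
    simp
  · simp
  · intro l _ hl
    refine Finset.sum_eq_zero fun k _ => ?_
    rw [if_neg (fun h => hl (huniq α j l hα h)) (c := ((l : ℕ) : ℝ) / N < α ∧ α ≤ (((l : ℕ) : ℝ) + 1) / N)]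
    simp
  · simp

lemma stepGraphon_meas {N : ℕ} (ξ : Fin N → Fin N → ℝ) :
    Measurable (Function.uncurry (stepGraphon ξ)) := by
  unfold stepGraphon Function.uncurry
  refine Finset.measurable_sum _ fun i _ => Finset.measurable_sum _ fun j _ => ?_
  refine Measurable.mul (Measurable.mul ?_ ?_) measurable_const
  · exact Measurable.ite (measurableSet_Ioc.preimage measurable_fst) measurable_const measurable_const
  · exact Measurable.ite (measurableSet_Ioc.preimage measurable_snd) measurable_const measurable_const

lemma stepGraphon_bdd {N : ℕ} (ξ : Fin N → Fin N → ℝ) (a b : ℝ) :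
    |stepGraphon ξ a b| ≤ ∑ i, ∑ j, |ξ i j| := by
  unfold stepGraphon
  refine (Finset.abs_sum_le_sum_abs _ _).trans (Finset.sum_le_sum fun i _ => ?_)
  refine (Finset.abs_sum_le_sum_abs _ _).trans (Finset.sum_le_sum fun j _ => ?_)
  split_ifs <;> simp

end partB

section partC

/-- The step function approximation of `f` at the right end points of the blocks. -/
noncomputable def stepF (f : ℝ → ℝ) (N : ℕ) : ℝ → ℝ :=
  (Set.Ioc (0:ℝ) 1).indicator (fun β => f (((⌈(N:ℝ) * β⌉ : ℤ) : ℝ) / N))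

lemma round_mem (N : ℕ) {β : ℝ} (hβ : β ∈ Set.Ioc (0:ℝ) 1) :
    ((⌈(N:ℝ) * β⌉ : ℤ) : ℝ) / N ∈ Set.Icc (0:ℝ) 1 := by
  have h0 : (0:ℤ) ≤ ⌈(N:ℝ) * β⌉ := Int.ceil_nonneg (mul_nonneg (by positivity) hβ.1.le)
  have h1 : ⌈(N:ℝ) * β⌉ ≤ (N:ℤ) := by
    rw [Int.ceil_le]; push_cast
    exact mul_le_of_le_one_right (by positivity) hβ.2
  have h0' : (0:ℝ) ≤ ((⌈(N:ℝ) * β⌉ : ℤ) : ℝ) := by exact_mod_cast h0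
  have h1' : ((⌈(N:ℝ) * β⌉ : ℤ) : ℝ) ≤ N := by exact_mod_cast h1
  exact ⟨by positivity, div_le_one_of_le₀ h1' (by positivity)⟩

lemma round_tendsto (β : ℝ) :
    Tendsto (fun N : ℕ => ((⌈(N:ℝ) * β⌉ : ℤ) : ℝ) / N) atTop (nhds β) := by
  rw [tendsto_iff_dist_tendsto_zero]
  refine squeeze_zero' (Eventually.of_forall fun _ => dist_nonneg) ?_
    (tendsto_one_div_atTop_nhds_zero_nat (𝕜 := ℝ))
  filter_upwards [eventually_gt_atTop 0] with N hN
  have hN' : (0:ℝ) < N := by exact_mod_cast hN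
  have h1 := Int.le_ceil ((N:ℝ) * β)
  have h2 := Int.ceil_lt_add_one ((N:ℝ) * β)
  have e : ((⌈(N:ℝ) * β⌉ : ℤ) : ℝ) / N - β = (((⌈(N:ℝ) * β⌉ : ℤ) : ℝ) - N * β) / N := by
    field_simp
  rw [Real.dist_eq, e, abs_of_nonneg (div_nonneg (by linarith) hN'.le)]
  gcongr
  linarith

lemma stepF_meas {f : ℝ → ℝ} (hf : Measurable f) (N : ℕ) : Measurable (stepF f N) := by
  unfold stepF
  refine Measurable.indicator ?_ measurableSet_Ioc
  refine hf.comp (Measurable.div_const ?_ _)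
  have : Measurable fun β : ℝ => ⌈(N:ℝ) * β⌉ := Int.measurable_ceil.comp (measurable_const_mul _)
  exact (measurable_from_top (f := fun z : ℤ => (z:ℝ))).comp this

lemma stepF_abs {f : ℝ → ℝ} (hb : ∀ β ∈ Set.Icc (0:ℝ) 1, |f β| ≤ 1) (N : ℕ) (β : ℝ) :
    |stepF f N β| ≤ 1 := by
  unfold stepF
  by_cases h : β ∈ Set.Ioc (0:ℝ) 1
  · rw [Set.indicator_of_mem h]; exact hb _ (round_mem N h)
  · rw [Set.indicator_of_notMem h]; simp

lemma stepF_L1 {f : ℝ → ℝ} (hf : Measurable f) (hb : ∀ β ∈ Set.Icc (0:ℝ) 1, |f β| ≤ 1)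
    {D : Finset ℝ} (hc : ∀ β ∈ Set.Ioo (0:ℝ) 1, β ∉ D → ContinuousAt f β) :
    Tendsto (fun N => ∫ β in Set.Ioc (0:ℝ) 1, |stepF f N β - f β|) atTop (nhds 0) := by
  have h := tendsto_integral_of_dominated_convergence
    (μ := volume.restrict (Set.Ioc (0:ℝ) 1)) (F := fun N β => |stepF f N β - f β|)
    (f := fun _ => (0:ℝ)) (fun _ => (2:ℝ))
    (fun N => ((stepF_meas hf N).sub hf).abs.aestronglyMeasurable)
    (integrable_const _)
    (fun N => by
      filter_upwards [ae_restrict_mem measurableSet_Ioc] with β hβ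
      rw [Real.norm_eq_abs, abs_abs]
      have h1 := stepF_abs hb N β
      have h2 := hb β (Ioc_sub_Icc hβ)
      exact (abs_sub _ _).trans (by linarith))
    (by
      have hD : ∀ᵐ β ∂(volume.restrict (Set.Ioc (0:ℝ) 1)), β ∉ (insert 1 D : Finset ℝ) := by
        refine ae_restrict_of_ae ?_
        exact compl_mem_ae_iff.2 ((insert 1 D : Finset ℝ).finite_toSet.measure_zero _)
      filter_upwards [ae_restrict_mem measurableSet_Ioc, hD] with β hβ hβD
      simp only [Finset.mem_insert, not_or] at hβD
      have hcont := hc β ⟨hβ.1, lt_of_le_of_ne hβ.2 hβD.1⟩ hβD.2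
      have h1 : Tendsto (fun N => stepF f N β) atTop (nhds (f β)) := by
        have := hcont.tendsto.comp (round_tendsto β)
        simpa only [stepF, Set.indicator_of_mem hβ, Function.comp_def] using this
      have h2 := (h1.sub_const (f β)).abs
      simpa using h2)
  simpa using h

lemma err_bound {W : ℝ → ℝ → ℝ} {LW : ℝ} (hW : IsGraphon W) (hWL : GraphonLipschitz W LW)
    {N : ℕ} (hN : 0 < N) (ξ : Fin N → Fin N → ℝ) {f : ℝ → ℝ} (hf : Measurable f)
    (hb : ∀ β ∈ Set.Icc (0:ℝ) 1, |f β| ≤ 1) :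
    (N:ℝ)⁻¹ * ∑ j : Fin N, |(N:ℝ)⁻¹ * ∑ k : Fin N, ξ j k * f ((((k : ℕ) : ℝ) + 1) / N) -
        ∫ β in Set.Ioc (0:ℝ) 1, W ((((j : ℕ) : ℝ) + 1) / N) β * f β| ≤
      (∫ α in Set.Ioc (0:ℝ) 1, |∫ β in Set.Ioc (0:ℝ) 1,
        (stepGraphon ξ α β - W α β) * stepF f N β|) +
      (|LW| * (1 / N) + ∫ β in Set.Ioc (0:ℝ) 1, |stepF f N β - f β|) := by
  have hN' : (0:ℝ) < N := by exact_mod_cast hN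
  set g := stepF f N with hg
  have hgm : Measurable g := stepF_meas hf N
  have hgb : ∀ β, |g β| ≤ 1 := stepF_abs hb N
  set c : ℝ := |LW| * (1 / N) + ∫ β in Set.Ioc (0:ℝ) 1, |g β - f β| with hcdef
  set h : ℝ → ℝ := fun α => ∫ β in Set.Ioc (0:ℝ) 1, (stepGraphon ξ α β - W α β) * g β with hh
  set B : ℝ := ∑ i, ∑ j, |ξ i j| with hB
  have hsm : ∀ α, Measurable (stepGraphon ξ α) := fun α =>
    (stepGraphon_meas ξ).comp (measurable_const.prodMk measurable_id)
  have hsb : ∀ α β, |stepGraphon ξ α β * g β| ≤ B := fun α β => by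
    rw [abs_mul]
    calc _ ≤ |stepGraphon ξ α β| * 1 := mul_le_mul_of_nonneg_left (hgb β) (abs_nonneg _)
      _ ≤ B := by rw [mul_one]; exact stepGraphon_bdd ξ α β
  have hsi : ∀ α, Integrable (fun β => stepGraphon ξ α β * g β)
      (volume.restrict (Set.Ioc (0:ℝ) 1)) := fun α =>
    integrableOn_of_bdd ((hsm α).mul hgm) (fun β _ => hsb α β)
  have hWi : ∀ α, Integrable (fun β => W α β * g β) (volume.restrict (Set.Ioc (0:ℝ) 1)) :=
    fun α => W_mul_integrable hW hgm (fun β _ => hgb β) α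
  have hdec : ∀ α, h α = (∫ β in Set.Ioc (0:ℝ) 1, stepGraphon ξ α β * g β)
      - ∫ β in Set.Ioc (0:ℝ) 1, W α β * g β := by
    intro α
    rw [← integral_sub (hsi α) (hWi α)]
    simp only [hh, sub_mul]
  have hhm : Measurable h := by
    have : Measurable (Function.uncurry fun α β => (stepGraphon ξ α β - W α β) * g β) :=
      ((stepGraphon_meas ξ).sub hW.1).mul (hgm.comp measurable_snd)
    exact (this.stronglyMeasurable.integral_prod_right (ν := volume.restrict (Set.Ioc (0:ℝ) 1))).measurable
  have hhb : ∀ α, |h α| ≤ B + 1 := by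
    intro α
    rw [hdec]
    have h1 := abs_setIntegral_le (f := fun β => stepGraphon ξ α β * g β) (fun β _ => hsb α β)
    have h2 := abs_setIntegral_le (W_mul_bdd hW (fun β _ => hgb β) α)
    exact (abs_sub _ _).trans (by linarith)
  have hfi : IntegrableOn (fun α => |h α| + c) (Set.Ioc (0:ℝ) 1) :=
    (integrableOn_of_bdd hhm.abs (C := B + 1) (fun α _ => by rw [abs_abs]; exact hhb α)).add
      (integrable_const c)
  have hrhs : ∫ α in Set.Ioc (0:ℝ) 1, (|h α| + c) = (∫ α in Set.Ioc (0:ℝ) 1, |h α|) + c := by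
    rw [integral_add (integrableOn_of_bdd hhm.abs (C := B + 1)
      (fun α _ => by rw [abs_abs]; exact hhb α)) (integrable_const c)]
    simp
  rw [← hrhs, block_sum hN hfi, Finset.mul_sum]
  refine Finset.sum_le_sum fun j _ => ?_
  rw [← block_const hN j (f := fun _ => |(N:ℝ)⁻¹ * ∑ k : Fin N, ξ j k * f ((((k : ℕ) : ℝ) + 1) / N) -
        ∫ β in Set.Ioc (0:ℝ) 1, W ((((j : ℕ) : ℝ) + 1) / N) β * f β|) (fun _ _ => rfl)]
  refine setIntegral_mono_on (by simp) (hfi.mono_set fun β hβ => block_sub hN j hβ)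
    measurableSet_Ioc fun α hα => ?_
  have hαI := block_sub hN j hα
  have hαj : (((j : ℕ) : ℝ) + 1) / N ∈ Set.Icc (0:ℝ) 1 := by
    refine ⟨by positivity, ?_⟩
    rw [div_le_one hN']; exact_mod_cast j.2
  have hstep : (N:ℝ)⁻¹ * ∑ k : Fin N, ξ j k * f ((((k : ℕ) : ℝ) + 1) / N) =
      ∫ β in Set.Ioc (0:ℝ) 1, stepGraphon ξ α β * g β := by
    rw [block_sum hN (hsi α), Finset.mul_sum]
    refine Finset.sum_congr rfl fun k _ => ?_
    rw [block_const hN k]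
    intro β hβ
    rw [stepGraphon_block hN ξ j k hα hβ, hg, stepF, Set.indicator_of_mem (block_sub hN k hβ),
      block_ceil hN k hβ]
  have h1 : |(∫ β in Set.Ioc (0:ℝ) 1, W α β * g β) -
      ∫ β in Set.Ioc (0:ℝ) 1, W ((((j : ℕ) : ℝ) + 1) / N) β * g β| ≤ |LW| * (1 / N) := by
    refine (W_integral_lip hW hWL hgm (fun β _ => hgb β) (Ioc_sub_Icc hαI) hαj).trans ?_
    refine mul_le_mul_of_nonneg_left ?_ (abs_nonneg _)
    have e1 := hα.1
    have e2 := hα.2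
    have e3 : (((j : ℕ) : ℝ) + 1) / N = ((j : ℕ) : ℝ) / N + 1 / N := by ring
    rw [abs_le]
    have e4 : (0:ℝ) < 1 / N := by positivity
    constructor <;> linarith
  have h2 : |(∫ β in Set.Ioc (0:ℝ) 1, W ((((j : ℕ) : ℝ) + 1) / N) β * g β) -
      ∫ β in Set.Ioc (0:ℝ) 1, W ((((j : ℕ) : ℝ) + 1) / N) β * f β| ≤
      ∫ β in Set.Ioc (0:ℝ) 1, |g β - f β| := by
    rw [← integral_sub (hWi _) (W_mul_integrable hW hf (fun β hβ => hb β (Ioc_sub_Icc hβ)) _)]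
    refine (abs_integral_le_integral_abs).trans ?_
    refine integral_mono_of_nonneg (Eventually.of_forall fun _ => abs_nonneg _) ?_
      (Eventually.of_forall fun β => ?_)
    · refine integrableOn_of_bdd (C := 2) (hgm.sub hf).abs fun β hβ => ?_
      rw [abs_abs]
      have h1 := hgb β
      have h2 := hb β (Ioc_sub_Icc hβ)
      exact (abs_sub _ _).trans (by linarith)
    · simp only
      rw [← mul_sub, abs_mul, abs_of_nonneg (hW.2.2 _ _).1]
      exact mul_le_of_le_one_left (abs_nonneg _) (hW.2.2 _ _).2
  have h3 := hdec α
  rw [hstep]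
  have e : (∫ β in Set.Ioc (0:ℝ) 1, stepGraphon ξ α β * g β) -
      (∫ β in Set.Ioc (0:ℝ) 1, W ((((j : ℕ) : ℝ) + 1) / N) β * f β) = h α +
      (((∫ β in Set.Ioc (0:ℝ) 1, W α β * g β) -
      ∫ β in Set.Ioc (0:ℝ) 1, W ((((j : ℕ) : ℝ) + 1) / N) β * g β) +
      ((∫ β in Set.Ioc (0:ℝ) 1, W ((((j : ℕ) : ℝ) + 1) / N) β * g β) -
      ∫ β in Set.Ioc (0:ℝ) 1, W ((((j : ℕ) : ℝ) + 1) / N) β * f β)) := by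
    rw [h3]; ring
  rw [e]
  refine (abs_add_le _ _).trans (add_le_add le_rfl ((abs_add_le _ _).trans (add_le_add h1 h2)))

lemma err_tendsto {W : ℝ → ℝ → ℝ} {LW : ℝ} (hW : IsGraphon W) (hWL : GraphonLipschitz W LW)
    (ξ : (N : ℕ) → Fin N → Fin N → ℝ) (hWconv : OpConvergesTo (fun N => stepGraphon (ξ N)) W)
    {f : ℝ → ℝ} (hf : Measurable f)
    (hb : ∀ β ∈ Set.Icc (0:ℝ) 1, |f β| ≤ 1)
    {D : Finset ℝ} (hc : ∀ β ∈ Set.Ioo (0:ℝ) 1, β ∉ D → ContinuousAt f β) :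
    Tendsto (fun N : ℕ => (N:ℝ)⁻¹ * ∑ j : Fin N,
      |(N:ℝ)⁻¹ * ∑ k : Fin N, ξ N j k * f ((((k : ℕ) : ℝ) + 1) / N) -
        ∫ β in Set.Ioc (0:ℝ) 1, W ((((j : ℕ) : ℝ) + 1) / N) β * f β|) atTop (nhds 0) := by
  have h1 : Tendsto (fun N : ℕ => ∫ α in Set.Ioc (0:ℝ) 1, |∫ β in Set.Ioc (0:ℝ) 1,
        (stepGraphon (ξ N) α β - W α β) * stepF f N β|) atTop (nhds 0) := by
    rw [Metric.tendsto_atTop]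
    intro ε hε
    obtain ⟨N₀, hN₀⟩ := hWconv (ε / 2) (by positivity)
    refine ⟨N₀, fun N hN => ?_⟩
    have := hN₀ N hN (stepF f N) (stepF_meas hf N) (stepF_abs hb N)
    rw [Real.dist_eq, sub_zero, abs_of_nonneg (integral_nonneg fun _ => abs_nonneg _)]
    linarith
  have h2 := (tendsto_one_div_atTop_nhds_zero_nat (𝕜 := ℝ)).const_mul |LW|
  have h3 := h1.add (h2.add (stepF_L1 hf hb hc))
  simp only [mul_zero, add_zero] at h3
  refine squeeze_zero' (Eventually.of_forall fun N => ?_) ?_ h3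
  · exact mul_nonneg (by positivity) (Finset.sum_nonneg fun _ _ => abs_nonneg _)
  · filter_upwards [eventually_gt_atTop 0] with N hN
    exact err_bound hW hWL hN (ξ N) hf hb

end partC

/-- convergence of the deviating agent's state law to its mean field
auxiliary system. Under Assumptions (W) and (Lip), for the N-agent policy
(π¹,…,π^{i−1},π̂,π^{i+1},…,π^N) with (π¹,…,π^N) = Γ_N(𝛑), for any uniformly bounded
family 𝒢 of functions g : 𝒳 → ℝ and any ε, p > 0, t ∈ 𝒯, there exists N' such that
for all N > N': sup_{g∈𝒢} |E[g(X^i_t)] − E[g(X̂^{i/N}_t)]| < ε, uniformly over all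
π̂ ∈ Π and all i in a set 𝒲_N of at least ⌊(1−p)N⌋ agents. -/
theorem deviating_agent_state_convergence
    {𝒳 𝒰 : Type*} [Fintype 𝒳] [DecidableEq 𝒳] [Nonempty 𝒳] [Fintype 𝒰] [Nonempty 𝒰]
    (T : ℕ) (μ0 : 𝒳 → ℝ) (hμ0 : μ0 ∈ simplex 𝒳)
    (P : 𝒳 → 𝒰 → (𝒳 → ℝ) → 𝒳 → ℝ) (hP : IsKernel P)
    (r : 𝒳 → 𝒰 → (𝒳 → ℝ) → ℝ)
    (Lr LP LW : ℝ) (hrLip : RewardLipschitz r Lr) (hPLip : KernelLipschitz P LP)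
    (W : ℝ → ℝ → ℝ) (hW : IsGraphon W) (hWLip : GraphonLipschitz W LW)
    (ξ : (N : ℕ) → Fin N → Fin N → ℝ) (hξ : ∀ N, IsEdgeWeights (ξ N))
    (hWconv : OpConvergesTo (fun N => stepGraphon (ξ N)) W)
    (πe : ℝ → ℕ → 𝒳 → 𝒰 → ℝ)
    (hπe : ∀ α ∈ Set.Icc (0:ℝ) 1, IsPolicy (πe α))
    (hπemeas : ∀ t x u, Measurable fun α => πe α t x u)
    (hπeLip : EnsembleLipschitzUpTo πe)
    (μ : ℕ → ℝ → 𝒳 → ℝ) (hμ : IsMeanFieldOf W P μ0 πe μ)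
    (𝒢 : Set (𝒳 → ℝ)) (Mg : ℝ) (h𝒢 : ∀ g ∈ 𝒢, ∀ x, |g x| ≤ Mg)
    (ε p : ℝ) (hε : 0 < ε) (hp : 0 < p) (t : ℕ) (ht : t < T) :
    ∃ N' : ℕ, ∀ N > N', ∃ Wset : Finset (Fin N),
      ⌊(1 - p) * (N : ℝ)⌋ ≤ (Wset.card : ℤ) ∧
      ∀ i ∈ Wset, ∀ πd : ℕ → 𝒳 → 𝒰 → ℝ, IsPolicy πd → ∀ g ∈ 𝒢,
        |(∑ X : Fin N → 𝒳,
            jointLaw P μ0 (ξ N) (Function.update (gammaN πe N) i πd) t X * g (X i)) -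
          ∑ x, stateLaw P μ0 (fun s => nbhd W (μ s) ((((i : ℕ) : ℝ) + 1) / N)) πd t x * g x|
          < ε := by
  have hL0 : (0:ℝ) ≤ |LP| := abs_nonneg _
  have hL : KernelLipschitz P |LP| := fun x u ν ν' h h' => (hPLip x u ν ν' h h').trans
    (mul_le_mul_of_nonneg_right (le_abs_self _) (Finset.sum_nonneg fun _ _ => abs_nonneg _))
  generalize |LP| = L at hL0 hL
  obtain ⟨Lπ, D, hD⟩ := hπeLip
  have hs := mf_simplex hW hμ0 hP hπe hμ
  set m : (N : ℕ) → ℕ → Fin N → 𝒳 → ℝ := fun N s j => μ s ((((j : ℕ) : ℝ) + 1) / N) with hmdef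
  set G : (N : ℕ) → ℕ → Fin N → 𝒳 → ℝ :=
    fun N s j => nbhd W (μ s) ((((j : ℕ) : ℝ) + 1) / N) with hGdef
  have hidx : ∀ (N : ℕ) (j : Fin N), (((j : ℕ) : ℝ) + 1) / N ∈ Set.Icc (0:ℝ) 1 := by
    intro N j
    have hN' : (0:ℝ) < N := by exact_mod_cast j.pos
    refine ⟨by positivity, ?_⟩
    rw [div_le_one hN']; exact_mod_cast j.2
  set A : ℕ → ℕ → ℝ := fun N s => (N:ℝ)⁻¹ * ∑ j, eN (ξ N) (m N s) (G N s j) j with hA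
  have hAlim : ∀ s, Tendsto (fun N => A N s) atTop (nhds 0) := by
    intro s
    have h1 := tendsto_finsetSum (Finset.univ : Finset 𝒳) fun x _ =>
      err_tendsto hW hWLip ξ hWconv (hμ.1 s x) (fun β hβ => simplex_abs_le (hs s β hβ) x)
        (D := D) (fun β hβ hβD => mf_continuousAt hW hWLip hμ0 hP hL hL0 hπe hμ hD hβ hβD s x)
    simp only [Finset.sum_const_zero] at h1
    refine h1.congr fun N => ?_
    simp only [hA, eN]
    rw [← Finset.mul_sum, Finset.sum_comm]
    rfl
  set dN : ℕ → ℕ → ℝ := fun N s =>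
    dl L (Fintype.card 𝒳) (1 / Real.sqrt N) (2 / N) (A N) s with hdN
  have hsq : Tendsto (fun N : ℕ => 1 / Real.sqrt N) atTop (nhds 0) := by
    have := (Real.tendsto_sqrt_atTop.comp tendsto_natCast_atTop_atTop).inv_tendsto_atTop
      (𝕜 := ℝ) (l := (atTop : Filter ℕ))
    refine this.congr fun N => ?_
    simp
  have h2N : Tendsto (fun N : ℕ => (2:ℝ) / N) atTop (nhds 0) :=
    tendsto_const_div_atTop_nhds_zero_nat 2
  have hdlim : ∀ s, Tendsto (fun N => dN N s) atTop (nhds 0) := by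
    intro s
    induction s with
    | zero => exact hsq
    | succ s ih =>
      have := ((hsq.add (((ih.const_mul (Fintype.card 𝒳 : ℝ)).add (hAlim s)).const_mul L)).add
        ih).add h2N
      simpa [hdN, dl] using this
  set C : ℝ := |Mg| with hC
  have hC0 : 0 ≤ C := abs_nonneg _
  have hCL : 0 ≤ C * L := mul_nonneg hC0 hL0
  set κ : ℝ := ε / (2 * (C * L + 1)) with hκ
  have hκ0 : 0 < κ := by positivity
  have hκ1 : C * L * κ ≤ ε / 2 := by
    rw [hκ, mul_div_assoc', div_le_div_iff₀ (by positivity) (by positivity)]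
    nlinarith
  have hS : Tendsto (fun N => C * L * ∑ s ∈ Finset.range t, (Fintype.card 𝒳 : ℝ) * dN N s)
      atTop (nhds 0) := by
    have := (tendsto_finsetSum (Finset.range t) fun s _ =>
      (hdlim s).const_mul (Fintype.card 𝒳 : ℝ)).const_mul (C * L)
    simpa using this
  have hB : Tendsto (fun N => ∑ s ∈ Finset.range t, A N s) atTop (nhds 0) := by
    have := tendsto_finsetSum (Finset.range t) fun s _ => hAlim s
    simpa using this
  have hev1 := hS.eventually (gt_mem_nhds (show (0:ℝ) < ε / 2 by positivity))
  have hev2 := hB.eventually (gt_mem_nhds (show (0:ℝ) < p * κ by positivity))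
  obtain ⟨N', hN'⟩ := eventually_atTop.1 (hev1.and hev2)
  refine ⟨N', fun N hN => ?_⟩
  obtain ⟨hb1, hb2⟩ := hN' N (le_of_lt hN)
  have hNpos : 0 < N := lt_of_le_of_lt (Nat.zero_le _) hN
  have hNr : (0:ℝ) < N := by exact_mod_cast hNpos
  set F : Fin N → ℝ := fun j => ∑ s ∈ Finset.range t, eN (ξ N) (m N s) (G N s j) j with hF
  have hF0 : ∀ j, 0 ≤ F j := fun j => Finset.sum_nonneg fun s _ =>
    Finset.sum_nonneg fun _ _ => abs_nonneg _
  have hFsum : ∑ s ∈ Finset.range t, A N s = (N:ℝ)⁻¹ * ∑ j, F j := by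
    simp only [hA, hF]
    rw [← Finset.mul_sum, Finset.sum_comm]
  refine ⟨Finset.univ.filter (fun j => F j < κ), ?_, ?_⟩
  · have hcard := Finset.card_filter_add_card_filter_not (s := (Finset.univ : Finset (Fin N)))
      (fun j => F j < κ)
    rw [Finset.card_univ, Fintype.card_fin] at hcard
    have hbad : ((Finset.univ.filter (fun j => ¬ F j < κ)).card : ℝ) * κ ≤ ∑ j, F j := by
      calc _ = ∑ j ∈ Finset.univ.filter (fun j => ¬ F j < κ), κ := by simp
        _ ≤ ∑ j ∈ Finset.univ.filter (fun j => ¬ F j < κ), F j :=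
            Finset.sum_le_sum fun j hj => not_lt.1 (Finset.mem_filter.1 hj).2
        _ ≤ _ := Finset.sum_le_sum_of_subset_of_nonneg (Finset.subset_univ _)
            (fun j _ _ => hF0 j)
    have hFs : ∑ j, F j < p * κ * N := by
      rw [hFsum, inv_mul_lt_iff₀ hNr] at hb2
      linarith
    have hbad2 : ((Finset.univ.filter (fun j => ¬ F j < κ)).card : ℝ) ≤ p * N := by
      refine le_of_mul_le_mul_right ?_ hκ0
      linarith
    have hcard' : ((Finset.univ.filter (fun j => F j < κ)).card : ℝ) +
        ((Finset.univ.filter (fun j => ¬ F j < κ)).card : ℝ) = N := by exact_mod_cast hcard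
    have hfl := Int.floor_le ((1 - p) * (N:ℝ))
    have : ((⌊(1 - p) * (N : ℝ)⌋ : ℤ) : ℝ) ≤
        (((Finset.univ.filter (fun j => F j < κ)).card : ℤ) : ℝ) := by
      rw [Int.cast_natCast]; linarith
    exact_mod_cast this
  · intro i hi πd hπd g hg
    have hFi : F i < κ := (Finset.mem_filter.1 hi).2
    have hπs : ∀ j, IsPolicy (Function.update (gammaN πe N) i πd j) := by
      intro j
      by_cases hj : j = i
      · subst hj; simpa using hπd
      · rw [Function.update_of_ne hj]; exact hπe _ (hidx N j)
    have hmain := deviating_bound (P := P) (μ0 := μ0) (ξ := ξ N)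
      (πs := Function.update (gammaN πe N) i πd) hNpos hμ0 hP (hξ N) hπs hL0 hL (m N) (G N)
      (fun s j => hs s _ (hidx N j))
      (fun s j => nbhd_subProb hW (hμ.1 s) (hs s) _) i
      (fun j => hμ.2.1 _ (hidx N j))
      (fun s j x' hj => by
        rw [Function.update_of_ne hj]
        exact hμ.2.2 s _ (hidx N j) x') hC0 t g
      (fun x => (h𝒢 g hg x).trans (le_abs_self _))
    rw [Function.update_self, Finset.sum_add_distrib, mul_add] at hmain
    have hlast : C * L * F i ≤ C * L * κ := mul_le_mul_of_nonneg_left hFi.le hCL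
    refine lt_of_le_of_lt hmain ?_
    have hb1' : C * L * ∑ s ∈ Finset.range t, (Fintype.card 𝒳 : ℝ) * dl L (Fintype.card 𝒳)
      (1 / Real.sqrt N) (2 / N) (fun t => (N:ℝ)⁻¹ * ∑ j, eN (ξ N) (m N t) (G N t j) j) s < ε / 2 := hb1
    linarith

end GMFG
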